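/- arXiv:1712.02460 — 7 statements merged into one kernel-verified Lean document; each statement's English description precedes it below -/
import Mathlib

section
/- If a Latin square L of order n ≥ 5 has a transversal, then every entry of L belongs to some minimal cover of L of size n + 1. -/
/-!
Index the entries of a transversal by their rows: it is `{(i, σ i, τ i)}` for two permutations
`σ, τ`, and `M i j = τ⁻¹ (L i (σ j))` is then an idempotent Latin square.

A cover of size `n + 1` is obtained from the transversal by removing the entries indexed by
`p ≠ q` and adding the entry in row `p` and the column of `q`, the entry in row `q` with the symbol
of `p`, and the entry in the column of `p` with the symbol of `q` (`exists_cover_of_swap`). Exactly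
one row, one column and one symbol are then covered twice, and the cover is minimal unless these
three lines meet in one of the kept entries. In that exceptional case `p, q` generate a cyclic
triple `p q = x`, `q x = p`, `x p = q` of `M`, and replacing the entries `p, q, x` of the transversal
by the three entries of this triple gives another transversal (`transversal_rotate`).

An entry outside the transversal either lies in a cover of this kind or, by rotating its cyclic
triple, lies in another transversal. For an entry `o` of a transversal (`exists_cover_on_transversal`),
suppose that no minimal cover of size `n + 1` contains it. Then all pairs of other indices lie in
cyclic triples. Choose a cyclic triple `a, b, c` avoiding `o`, rotate it, and apply the same argument
to the new transversal and the pair `a, d`, for any `d` outside `{a, b, c, o}`: this forces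
`a d = b`. Hence `d` is unique, so `n = 5`, and `{a, b, c, d}` occupies all of row `b` except
column `o`, which must then contain `o` in row `b` as well as in row `o`; contradiction.
-/

/-- The set of entries `(i, j, L i j)` of a square array `L`. -/
def lsEntries {ι : Type} [Fintype ι] [DecidableEq ι] (L : ι → ι → ι) :
    Finset (ι × ι × ι) :=
  Finset.univ.image fun p : ι × ι => (p.1, p.2, L p.1 p.2)

/-- `L` is a Latin square: every row and every column is a bijection. -/
def IsLatin {ι : Type} (L : ι → ι → ι) : Prop :=
  (∀ i, Function.Bijective fun j => L i j) ∧ (∀ j, Function.Bijective fun i => L i j)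

/-- A cover: a set of entries representing every row, column and symbol. -/
def IsLSCover {ι : Type} [Fintype ι] [DecidableEq ι] (L : ι → ι → ι)
    (C : Finset (ι × ι × ι)) : Prop :=
  C ⊆ lsEntries L ∧ (∀ i : ι, ∃ e ∈ C, e.1 = i) ∧ (∀ j : ι, ∃ e ∈ C, e.2.1 = j) ∧
    (∀ s : ι, ∃ e ∈ C, e.2.2 = s)

/-- A minimal cover: no entry can be removed keeping it a cover. -/
def IsMinimalLSCover {ι : Type} [Fintype ι] [DecidableEq ι] (L : ι → ι → ι)
    (C : Finset (ι × ι × ι)) : Prop :=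
  IsLSCover L C ∧ ∀ e ∈ C, ¬ IsLSCover L (C.erase e)

/-- A partial transversal: a set of entries representing every line at most once. -/
def IsPT {ι : Type} [Fintype ι] [DecidableEq ι] (L : ι → ι → ι)
    (T : Finset (ι × ι × ι)) : Prop :=
  T ⊆ lsEntries L ∧
    ∀ e ∈ T, ∀ f ∈ T, e ≠ f → e.1 ≠ f.1 ∧ e.2.1 ≠ f.2.1 ∧ e.2.2 ≠ f.2.2

/-- A maximal partial transversal: not contained in any larger partial transversal. -/
def IsMaximalPT {ι : Type} [Fintype ι] [DecidableEq ι] (L : ι → ι → ι)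
    (T : Finset (ι × ι × ι)) : Prop :=
  IsPT L T ∧ ∀ e ∈ lsEntries L, e ∉ T → ¬ IsPT L (insert e T)

/-- Exchange of the entries `p, q` of the transversal `{(i, σ i, τ i)}` for three new ones. The
doubly covered lines are row `z`, column `σ y` and symbol `τ x`. -/
lemma exists_cover_of_swap {n : ℕ} (L : Fin n → Fin n → Fin n) (hL : IsLatin L)
    (σ τ : Equiv.Perm (Fin n)) (hT : ∀ i, L i (σ i) = τ i) {p q x y z : Fin n} (hpq : p ≠ q)
    (hx : L p (σ q) = τ x) (hy : L q (σ y) = τ p) (hz : L z (σ p) = τ q)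
    (hne : ¬ (x = y ∧ y = z)) :
    ∃ C : Finset (Fin n × Fin n × Fin n), IsMinimalLSCover L C ∧ C.card = n + 1 ∧
      (∀ i, i ≠ p → i ≠ q → (i, σ i, τ i) ∈ C) ∧ (p, σ q, τ x) ∈ C := by
  have rinj : ∀ i j j', L i j = L i j' → j = j' := fun i j j' h => (hL.1 i).1 h
  have cinj : ∀ i i' j, L i j = L i' j → i = i' := fun i i' j h => (hL.2 j).1 h
  have hyp : y ≠ p := by
    rintro rfl; exact hpq (cinj _ _ _ ((hT y).trans hy.symm))
  have hzp : z ≠ p := by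
    rintro rfl; exact hpq (τ.injective ((hT z).symm.trans hz))
  have hzq : z ≠ q := by
    rintro rfl; exact hpq (σ.injective (rinj _ _ _ (hz.trans (hT z).symm)))
  set K : Finset (Fin n × Fin n × Fin n) :=
    ((Finset.univ.erase p).erase q).image fun i => (i, σ i, τ i) with hK
  set C : Finset (Fin n × Fin n × Fin n) :=
    insert (p, σ q, τ x) (insert (q, σ y, τ p) (insert (z, σ p, τ q) K)) with hC
  have memK : ∀ e, e ∈ K ↔ ∃ i, i ≠ q ∧ i ≠ p ∧ (i, σ i, τ i) = e := by
    intro e; simp [hK, and_assoc]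
  have memC : ∀ e, e ∈ C ↔ e = (p, σ q, τ x) ∨ e = (q, σ y, τ p) ∨ e = (z, σ p, τ q) ∨
      ∃ i, i ≠ q ∧ i ≠ p ∧ (i, σ i, τ i) = e := by
    intro e; simp only [hC, Finset.mem_insert, memK]
  have m1 : (p, σ q, τ x) ∈ C := (memC _).2 (Or.inl rfl)
  have m2 : (q, σ y, τ p) ∈ C := (memC _).2 (Or.inr (Or.inl rfl))
  have m3 : (z, σ p, τ q) ∈ C := (memC _).2 (Or.inr (Or.inr (Or.inl rfl)))
  have m4 : ∀ i, i ≠ p → i ≠ q → (i, σ i, τ i) ∈ C := fun i hp hq =>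
    (memC _).2 (Or.inr (Or.inr (Or.inr ⟨i, hq, hp, rfl⟩)))
  refine ⟨C, ⟨⟨?_, ?_, ?_, ?_⟩, ?_⟩, ?_, m4, m1⟩
  · intro e he
    simp only [lsEntries, Finset.mem_image, Finset.mem_univ, true_and, Prod.exists]
    rcases (memC e).1 he with rfl | rfl | rfl | ⟨i, -, -, rfl⟩
    · exact ⟨p, σ q, by rw [hx]⟩
    · exact ⟨q, σ y, by rw [hy]⟩
    · exact ⟨z, σ p, by rw [hz]⟩
    · exact ⟨i, σ i, by rw [hT]⟩
  · intro i
    by_cases h1 : i = p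
    · exact ⟨_, m1, h1.symm⟩
    by_cases h2 : i = q
    · exact ⟨_, m2, h2.symm⟩
    exact ⟨_, m4 i h1 h2, rfl⟩
  · intro j
    obtain ⟨i, rfl⟩ := σ.surjective j
    by_cases h1 : i = p
    · exact ⟨_, m3, by rw [h1]⟩
    by_cases h2 : i = q
    · exact ⟨_, m1, by rw [h2]⟩
    exact ⟨_, m4 i h1 h2, rfl⟩
  · intro j
    obtain ⟨i, rfl⟩ := τ.surjective j
    by_cases h1 : i = p
    · exact ⟨_, m2, by rw [h1]⟩
    by_cases h2 : i = q
    · exact ⟨_, m3, by rw [h2]⟩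
    exact ⟨_, m4 i h1 h2, rfl⟩
  · -- Each entry of `C` is the only one on some line.
    rintro e he ⟨-, hr, hc, hs⟩
    rcases (memC e).1 he with rfl | rfl | rfl | ⟨i, hiq, hip, rfl⟩
    · obtain ⟨f, hf, hf'⟩ := hr p
      obtain ⟨hfe, hfC⟩ := Finset.mem_erase.1 hf
      rcases (memC f).1 hfC with rfl | rfl | rfl | ⟨i, hiq, hip, rfl⟩
      · exact hfe rfl
      · exact hpq hf'.symm
      · exact hzp hf'
      · exact hip hf'
    · obtain ⟨f, hf, hf'⟩ := hr q
      obtain ⟨hfe, hfC⟩ := Finset.mem_erase.1 hf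
      rcases (memC f).1 hfC with rfl | rfl | rfl | ⟨i, hiq, hip, rfl⟩
      · exact hpq hf'
      · exact hfe rfl
      · exact hzq hf'
      · exact hiq hf'
    · obtain ⟨f, hf, hf'⟩ := hc (σ p)
      obtain ⟨hfe, hfC⟩ := Finset.mem_erase.1 hf
      rcases (memC f).1 hfC with rfl | rfl | rfl | ⟨i, hiq, hip, rfl⟩
      · exact hpq (σ.injective hf').symm
      · exact hyp (σ.injective hf')
      · exact hfe rfl
      · exact hip (σ.injective hf')
    · have key : z = i ∧ y = i ∧ x = i := by
        refine ⟨?_, ?_, ?_⟩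
        · obtain ⟨f, hf, hf'⟩ := hr i
          obtain ⟨hfe, hfC⟩ := Finset.mem_erase.1 hf
          rcases (memC f).1 hfC with rfl | rfl | rfl | ⟨i', -, -, rfl⟩
          · exact absurd hf'.symm hip
          · exact absurd hf'.symm hiq
          · exact hf'
          · obtain rfl : i' = i := hf'
            exact absurd rfl hfe
        · obtain ⟨f, hf, hf'⟩ := hc (σ i)
          obtain ⟨hfe, hfC⟩ := Finset.mem_erase.1 hf
          rcases (memC f).1 hfC with rfl | rfl | rfl | ⟨i', -, -, rfl⟩
          · exact absurd (σ.injective hf').symm hiq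
          · exact σ.injective hf'
          · exact absurd (σ.injective hf').symm hip
          · obtain rfl : i' = i := σ.injective hf'
            exact absurd rfl hfe
        · obtain ⟨f, hf, hf'⟩ := hs (τ i)
          obtain ⟨hfe, hfC⟩ := Finset.mem_erase.1 hf
          rcases (memC f).1 hfC with rfl | rfl | rfl | ⟨i', -, -, rfl⟩
          · exact τ.injective hf'
          · exact absurd (τ.injective hf').symm hip
          · exact absurd (τ.injective hf').symm hiq
          · obtain rfl : i' = i := τ.injective hf'
            exact absurd rfl hfe
      obtain ⟨rfl, rfl, rfl⟩ := key
      exact hne ⟨rfl, rfl⟩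
  · have c0 : K.card = n - 1 - 1 := by
      rw [hK, Finset.card_image_of_injective _ (fun i j h => congrArg Prod.fst h),
        Finset.card_erase_of_mem (by simp [hpq.symm]), Finset.card_erase_of_mem (by simp)]
      simp
    have n3 : (z, σ p, τ q) ∉ K := by
      rw [memK]; rintro ⟨i, -, hip, h⟩
      simp only [Prod.mk.injEq, EmbeddingLike.apply_eq_iff_eq] at h
      exact hip h.2.1
    have n2 : (q, σ y, τ p) ∉ insert (z, σ p, τ q) K := by
      rw [Finset.mem_insert, memK]
      rintro (h | ⟨i, hiq, -, h⟩)
      · exact hzq (congrArg Prod.fst h).symm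
      · exact hiq (congrArg Prod.fst h)
    have n1 : (p, σ q, τ x) ∉ insert (q, σ y, τ p) (insert (z, σ p, τ q) K) := by
      rw [Finset.mem_insert, Finset.mem_insert, memK]
      rintro (h | h | ⟨i, -, hip, h⟩)
      · exact hpq (congrArg Prod.fst h)
      · exact hzp (congrArg Prod.fst h).symm
      · exact hip (congrArg Prod.fst h)
    rw [hC, Finset.card_insert_of_notMem n1, Finset.card_insert_of_notMem n2,
      Finset.card_insert_of_notMem n3, c0]
    -- `n ≥ 2` because `p ≠ q`, so the truncated subtraction is harmless.
    have := p.isLt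
    have := q.isLt
    have : (p : ℕ) ≠ q := fun h => hpq (Fin.ext h)
    omega

/-- Either a good exchange at `p, q` exists, or `p, q` lie in a cyclic triple. -/
lemma exists_cover_or_triple {n : ℕ} (L : Fin n → Fin n → Fin n) (hL : IsLatin L)
    (σ τ : Equiv.Perm (Fin n)) (hT : ∀ i, L i (σ i) = τ i) {p q : Fin n} (hpq : p ≠ q) :
    (∃ C : Finset (Fin n × Fin n × Fin n), IsMinimalLSCover L C ∧ C.card = n + 1 ∧
      (∀ i, i ≠ p → i ≠ q → (i, σ i, τ i) ∈ C) ∧ (p, σ q, L p (σ q)) ∈ C) ∨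
    ∃ x, L p (σ q) = τ x ∧ L q (σ x) = τ p ∧ L x (σ p) = τ q := by
  obtain ⟨x, hx⟩ := τ.surjective (L p (σ q))
  obtain ⟨y', hy⟩ := (hL.1 q).2 (τ p)
  obtain ⟨y, rfl⟩ := σ.surjective y'
  obtain ⟨z, hz⟩ := (hL.2 (σ p)).2 (τ q)
  by_cases h : x = y ∧ y = z
  · obtain ⟨rfl, rfl⟩ := h
    exact Or.inr ⟨x, hx.symm, hy, hz⟩
  · left
    rw [← hx]
    exact exists_cover_of_swap L hL σ τ hT hpq hx.symm hy hz h

/-- The 3-cycle `a ↦ b ↦ c ↦ a`. -/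
def cyc {n : ℕ} (a b c : Fin n) : Equiv.Perm (Fin n) := Equiv.swap a b * Equiv.swap b c

lemma cyc_spec {n : ℕ} {a b c : Fin n} (hab : a ≠ b) (hbc : b ≠ c) (hca : c ≠ a) :
    cyc a b c a = b ∧ cyc a b c b = c ∧ cyc a b c c = a ∧
      ∀ d, d ≠ a → d ≠ b → d ≠ c → cyc a b c d = d := by
  refine ⟨?_, ?_, ?_, ?_⟩
  · simp [cyc, Equiv.swap_apply_of_ne_of_ne hab hca.symm]
  · simp [cyc, Equiv.swap_apply_of_ne_of_ne hca hbc.symm]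
  · simp [cyc]
  · intro d h1 h2 h3
    simp [cyc, Equiv.swap_apply_of_ne_of_ne h2 h3, Equiv.swap_apply_of_ne_of_ne h1 h2]

/-- Rotating a cyclic triple of a transversal gives a transversal. -/
lemma transversal_rotate {n : ℕ} (L : Fin n → Fin n → Fin n)
    (σ τ : Equiv.Perm (Fin n)) (hT : ∀ i, L i (σ i) = τ i) {a b c : Fin n}
    (hab : a ≠ b) (hbc : b ≠ c) (hca : c ≠ a)
    (h1 : L a (σ b) = τ c) (h2 : L b (σ c) = τ a) (h3 : L c (σ a) = τ b) :
    ∀ i, L i ((σ * cyc a b c) i) = (τ * cyc a b c * cyc a b c) i := by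
  obtain ⟨ra, rb, rc, rd⟩ := cyc_spec hab hbc hca
  intro i
  simp only [Equiv.Perm.mul_apply]
  by_cases ha : i = a
  · subst ha; rw [ra, rb, h1]
  by_cases hb : i = b
  · subst hb; rw [rb, rc, h2]
  by_cases hc : i = c
  · subst hc; rw [rc, ra, h3]
  rw [rd i ha hb hc, rd i ha hb hc, hT]

/-- A set of `n ≥ 5` indices has one outside any four given ones. -/
lemma exists_ne_four {n : ℕ} (hn : 5 ≤ n) (a b c d : Fin n) :
    ∃ e, e ≠ a ∧ e ≠ b ∧ e ≠ c ∧ e ≠ d := by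
  have h : ({a, b, c, d} : Finset (Fin n)).card < (Finset.univ : Finset (Fin n)).card := by
    rw [Finset.card_univ, Fintype.card_fin]
    exact lt_of_le_of_lt Finset.card_le_four (by omega)
  obtain ⟨e, -, he⟩ := Finset.exists_mem_notMem_of_card_lt_card h
  simp only [Finset.mem_insert, Finset.mem_singleton, not_or] at he
  exact ⟨e, he⟩

lemma exists_cover_on_transversal {n : ℕ} (hn : 5 ≤ n) (L : Fin n → Fin n → Fin n)
    (hL : IsLatin L) (σ τ : Equiv.Perm (Fin n)) (hT : ∀ i, L i (σ i) = τ i) (o : Fin n) :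
    ∃ C : Finset (Fin n × Fin n × Fin n),
      IsMinimalLSCover L C ∧ C.card = n + 1 ∧ (o, σ o, τ o) ∈ C := by
  by_contra hno
  -- `M` is `L` relabelled so that the transversal is the diagonal `M i i = i`.
  obtain ⟨M, hM⟩ : ∃ M : Fin n → Fin n → Fin n, ∀ i j, L i (σ j) = τ (M i j) :=
    ⟨fun i j => τ.symm (L i (σ j)), fun i j => by simp⟩
  have idem : ∀ i, M i i = i := fun i => τ.injective ((hM i i).symm.trans (hT i))
  have rinj : ∀ i j j', M i j = M i j' → j = j' := fun i j j' h =>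
    σ.injective ((hL.1 i).1 (by simp only [hM, h]))
  have cinj : ∀ i i' j, M i j = M i' j → i = i' := fun i i' j h =>
    (hL.2 (σ j)).1 (by simp only [hM, h])
  have triple : ∀ p q, p ≠ q → p ≠ o → q ≠ o → M q (M p q) = p ∧ M (M p q) p = q := by
    intro p q hpq hp hq
    rcases exists_cover_or_triple L hL σ τ hT hpq with ⟨C, hC, hcard, hmem, -⟩ | ⟨x, h1, h2, h3⟩
    · exact absurd ⟨C, hC, hcard, hmem o hp.symm hq.symm⟩ hno
    · simp only [hM, EmbeddingLike.apply_eq_iff_eq] at h1 h2 h3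
      rw [h1]; exact ⟨h2, h3⟩
  obtain ⟨a, hao, -, -, -⟩ := exists_ne_four hn o o o o
  obtain ⟨b, hba, hbo, hMab⟩ : ∃ b, b ≠ a ∧ b ≠ o ∧ M a b ≠ o := by
    obtain ⟨b, h1, h2, -, -⟩ := exists_ne_four hn a o o o
    by_cases h : M a b = o
    · obtain ⟨b', h1', h2', h3', -⟩ := exists_ne_four hn a o b o
      exact ⟨b', h1', h2', fun h' => h3' (rinj a _ _ (h'.trans h.symm))⟩
    · exact ⟨b, h1, h2, h⟩
  obtain ⟨c, hc⟩ : ∃ c, M a b = c := ⟨_, rfl⟩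
  rw [hc] at hMab
  obtain ⟨hbc, hca⟩ := triple a b hba.symm hao hbo
  rw [hc] at hbc hca
  have hcna : c ≠ a := by
    rintro rfl; exact hba (rinj c _ _ (hc.trans (idem c).symm))
  have hbnc : b ≠ c := by
    rintro rfl; exact hba (cinj _ _ b ((idem b).trans hc.symm))
  obtain ⟨ra, rb, rc, rd⟩ := cyc_spec hba.symm hbnc hcna
  have hT' := transversal_rotate L σ τ hT hba.symm hbnc hcna (by rw [hM, hc]) (by rw [hM, hbc])
    (by rw [hM, hca])
  -- The exchange at `a, d` in the rotated transversal.
  have forced : ∀ d, d ≠ a → d ≠ b → d ≠ c → d ≠ o → M a d = b ∧ M b d = c := by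
    intro d hda hdb hdc hdo
    rcases exists_cover_or_triple L hL _ _ hT' hda.symm with
      ⟨C, hC, hcard, hmem, -⟩ | ⟨x, h1, h2, h3⟩
    · have := hmem o hao.symm hdo.symm
      simp only [Equiv.Perm.mul_apply, rd o hao.symm hbo.symm hMab.symm] at this
      exact absurd ⟨C, hC, hcard, this⟩ hno
    · simp only [Equiv.Perm.mul_apply, hM, EmbeddingLike.apply_eq_iff_eq, ra, rb,
        rd d hda hdb hdc] at h1 h2 h3
      -- `M x b = d` means `x = M b d`.
      have hx : M b d = x := by
        apply cinj _ _ b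
        rw [h3]; exact (triple b d hdb.symm hbo hdo).2
      by_cases hxa : x = a
      · exact absurd (rinj b _ _ (hx.trans (hxa.trans hbc.symm))) hdc
      by_cases hxb : x = b
      · exact absurd (rinj b _ _ (hx.trans (hxb.trans (idem b).symm))) hdb
      by_cases hxc : x = c
      · rw [hxc, rc, ra] at h1
        exact ⟨h1, hx.trans hxc⟩
      · rw [rd x hxa hxb hxc, rd x hxa hxb hxc] at h1
        exact absurd (cinj _ _ d (hx.trans h1.symm)) hba
  obtain ⟨d, hda, hdb, hdc, hdo⟩ := exists_ne_four hn a b c o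
  obtain ⟨had, hbd⟩ := forced d hda hdb hdc hdo
  have hbad : M b a = d := by
    have := (triple a d hda.symm hao hdo).2
    rwa [had] at this
  by_cases h1 : M b o = a
  · exact hMab (rinj b _ _ (hbc.trans h1.symm))
  by_cases h2 : M b o = b
  · exact hbo (rinj b _ _ ((idem b).trans h2.symm))
  by_cases h3 : M b o = c
  · exact hdo (rinj b _ _ (hbd.trans h3.symm))
  by_cases h4 : M b o = o
  · exact hbo (cinj _ _ o (h4.trans (idem o).symm))
  have h5 : M b o = d := rinj a _ _ ((forced _ h1 h2 h3 h4).1.trans had.symm)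
  exact hao (rinj b _ _ (hbad.trans h5.symm))

/-- A transversal is `{(i, σ i, τ i)}` for permutations `σ, τ`: `n` entries in pairwise
distinct rows meet every row, so they can be indexed by rows. -/
lemma exists_perms {n : ℕ} (L : Fin n → Fin n → Fin n)
    (T : Finset (Fin n × Fin n × Fin n)) (hT : IsPT L T) (hTcard : T.card = n) :
    ∃ σ τ : Equiv.Perm (Fin n), ∀ i, L i (σ i) = τ i := by
  have hinj : Set.InjOn Prod.fst (T : Set (Fin n × Fin n × Fin n)) := by
    intro e he f hf h
    by_contra hne
    exact (hT.2 e he f hf hne).1 h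
  have himg : T.image Prod.fst = Finset.univ := by
    rw [← Finset.card_eq_iff_eq_univ, Finset.card_image_of_injOn hinj, hTcard, Fintype.card_fin]
  have hex : ∀ i : Fin n, ∃ e ∈ T, e.1 = i := fun i =>
    Finset.mem_image.1 (himg ▸ Finset.mem_univ i)
  choose t ht hti using hex
  have hσ : Function.Injective fun i => (t i).2.1 := by
    intro i j h
    by_contra hne
    exact (hT.2 _ (ht i) _ (ht j) (fun h' => hne (by rw [← hti i, h', hti j]))).2.1 h
  have hτ : Function.Injective fun i => (t i).2.2 := by
    intro i j h
    by_contra hne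
    exact (hT.2 _ (ht i) _ (ht j) (fun h' => hne (by rw [← hti i, h', hti j]))).2.2 h
  refine ⟨Equiv.ofBijective _ (Finite.injective_iff_bijective.1 hσ),
    Equiv.ofBijective _ (Finite.injective_iff_bijective.1 hτ), fun i => ?_⟩
  obtain ⟨⟨r, s⟩, -, h⟩ := Finset.mem_image.1 (hT.1 (ht i))
  have := hti i
  simp only [Equiv.ofBijective_apply]
  rw [← h] at this ⊢
  subst this
  rfl

/-- If a Latin square of order `n ≥ 5` has a transversal, then every entry belongs to
some minimal cover of size `n + 1`. -/
theorem stmt13 {n : ℕ} (hn : 5 ≤ n) (L : Fin n → Fin n → Fin n) (hL : IsLatin L)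
    (T : Finset (Fin n × Fin n × Fin n)) (hT : IsPT L T) (hTcard : T.card = n) :
    ∀ e ∈ lsEntries L, ∃ C : Finset (Fin n × Fin n × Fin n),
      IsMinimalLSCover L C ∧ C.card = n + 1 ∧ e ∈ C := by
  obtain ⟨σ, τ, hστ⟩ := exists_perms L T hT hTcard
  intro e he
  obtain ⟨⟨i, j'⟩, -, rfl⟩ := Finset.mem_image.1 he
  obtain ⟨j, rfl⟩ := σ.surjective j'
  by_cases hij : i = j
  · subst hij
    simpa only [hστ] using exists_cover_on_transversal hn L hL σ τ hστ i
  rcases exists_cover_or_triple L hL σ τ hστ hij with ⟨C, hC, hcard, -, hmem⟩ | ⟨k, h1, h2, h3⟩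
  · exact ⟨C, hC, hcard, hmem⟩
  · have hki : k ≠ i := by
      rintro rfl
      exact hij (σ.injective ((hL.1 k).1 ((hστ k).trans h1.symm)))
    have hjk : j ≠ k := by
      rintro rfl
      exact hij ((hL.2 (σ j)).1 (h1.trans (hστ j).symm))
    obtain ⟨ri, rj, -, -⟩ := cyc_spec hij hjk hki
    have := exists_cover_on_transversal hn L hL _ _
      (transversal_rotate L σ τ hστ hij hjk hki h1 h2 h3) i
    simpa only [Equiv.Perm.mul_apply, ri, rj, h1] using this
end

section
/- Every Latin square L of order n ≥ 1 contains a minimal cover of size 2n − 1; furthermore, every entry of L belongs to some minimal cover of size 2n − 1. -/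
/-- The entries in row `r` or column `c`, written as a disjoint union: the whole row, and the
column without its entry in row `r`. -/
def cross {n : ℕ} (L : Fin n → Fin n → Fin n) (r c : Fin n) : Finset (Fin n × Fin n × Fin n) :=
  Finset.univ.image (fun j => (r, j, L r j)) ∪
    (Finset.univ.erase r).image (fun i => (i, c, L i c))

lemma mem_cross {n : ℕ} {L : Fin n → Fin n → Fin n} {r c i j s : Fin n} :
    (i, j, s) ∈ cross L r c ↔ L i j = s ∧ (i = r ∨ j = c) := by
  simp only [cross, Finset.mem_union, Finset.mem_image, Finset.mem_univ, Finset.mem_erase,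
    true_and, and_true, Prod.mk.injEq]
  grind

lemma card_cross {n : ℕ} (L : Fin n → Fin n → Fin n) (r c : Fin n) :
    (cross L r c).card = 2 * n - 1 := by
  have hn : 0 < n := r.pos
  rw [cross, Finset.card_union_of_disjoint, Finset.card_image_of_injective,
    Finset.card_image_of_injective, Finset.card_erase_of_mem (Finset.mem_univ r),
    Finset.card_univ, Fintype.card_fin]
  · omega
  · intro a b h
    simpa using congrArg Prod.fst h
  · intro a b h
    simpa using congrArg (fun e => e.2.1) h
  · rw [Finset.disjoint_left]
    intro e h₁ h₂
    simp only [Finset.mem_image, Finset.mem_univ, Finset.mem_erase, true_and, and_true] at h₁ h₂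
    grind

lemma isMinimalLSCover_cross {n : ℕ} {L : Fin n → Fin n → Fin n} (hL : IsLatin L)
    (r c : Fin n) : IsMinimalLSCover L (cross L r c) := by
  refine ⟨⟨?_, fun i => ⟨(i, c, L i c), mem_cross.2 ⟨rfl, Or.inr rfl⟩, rfl⟩,
    fun j => ⟨(r, j, L r j), mem_cross.2 ⟨rfl, Or.inl rfl⟩, rfl⟩, fun s => ?_⟩, ?_⟩
  · rintro ⟨i, j, s⟩ h
    obtain ⟨rfl, -⟩ := mem_cross.1 h
    exact Finset.mem_image.2 ⟨(i, j), Finset.mem_univ _, rfl⟩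
  · obtain ⟨j, hj⟩ := (hL.1 r).2 s
    exact ⟨(r, j, L r j), mem_cross.2 ⟨rfl, Or.inl rfl⟩, hj⟩
  · rintro ⟨i, j, s⟩ h ⟨-, hrow, hcol, hsym⟩
    obtain ⟨rfl, hij⟩ := mem_cross.1 h
    by_cases hi : i = r
    · by_cases hj : j = c
      · -- At the centre, the symbol `L r c` would have to recur elsewhere in the cross.
        obtain ⟨⟨i', j', s'⟩, he, hs⟩ := hsym (L i j)
        obtain ⟨hne, he⟩ := Finset.mem_erase.1 he
        obtain ⟨rfl, rfl | rfl⟩ := mem_cross.1 he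
        · subst hi
          have : j' = j := (hL.1 i).1 hs
          exact hne (by rw [this])
        · subst hj
          have : i' = i := (hL.2 j).1 hs
          exact hne (by rw [this])
      · obtain ⟨⟨i', j', s'⟩, he, hs⟩ := hcol j
        obtain ⟨hne, he⟩ := Finset.mem_erase.1 he
        obtain ⟨rfl, h'⟩ := mem_cross.1 he
        grind
    · obtain ⟨⟨i', j', s'⟩, he, hs⟩ := hrow i
      obtain ⟨hne, he⟩ := Finset.mem_erase.1 he
      obtain ⟨rfl, h'⟩ := mem_cross.1 he
      grind

/-- Every Latin square of order `n ≥ 1` contains a minimal cover of size `2n - 1`;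
furthermore every entry belongs to such a minimal cover. -/
theorem stmt14 {n : ℕ} (hn : 1 ≤ n) (L : Fin n → Fin n → Fin n) (hL : IsLatin L) :
    (∃ C : Finset (Fin n × Fin n × Fin n),
        IsMinimalLSCover L C ∧ C.card = 2 * n - 1) ∧
      ∀ e ∈ lsEntries L, ∃ C : Finset (Fin n × Fin n × Fin n),
        IsMinimalLSCover L C ∧ C.card = 2 * n - 1 ∧ e ∈ C := by
  refine ⟨⟨cross L ⟨0, hn⟩ ⟨0, hn⟩, isMinimalLSCover_cross hL _ _, card_cross _ _ _⟩, ?_⟩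
  intro e he
  obtain ⟨⟨r, c⟩, -, rfl⟩ := Finset.mem_image.1 he
  exact ⟨cross L r c, isMinimalLSCover_cross hL r c, card_cross L r c,
    mem_cross.2 ⟨rfl, Or.inl rfl⟩⟩
end

section
/- Every minimal cover of a Latin square of order n has size at most ⌊3(n + 1/2 − √(n + 1/4))⌋. -/
open Finset

section UniqueLines

variable {α : Type} {n : ℕ}

/-- The line of `e` in the direction of the coordinate `π` contains no other element of `C`. -/
def UniqueOn (C : Finset α) (π : α → Fin n) (e : α) : Prop :=
  ∀ f ∈ C, π f = π e → f = e

open Classical in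
/-- The lines of direction `π` that are not the line of any `e ∈ C` with `UniqueOn C π e`; when `C`
is a cover these are the lines containing at least two elements of `C`. -/
noncomputable def nonuniqueLines (C : Finset α) (π : α → Fin n) : Finset (Fin n) :=
  univ \ (C.filter (UniqueOn C π)).image π

open Classical in
lemma card_nonuniqueLines_add (C : Finset α) (π : α → Fin n) :
    #(nonuniqueLines C π) + #(C.filter (UniqueOn C π)) = n := by
  have h : #((C.filter (UniqueOn C π)).image π) = #(C.filter (UniqueOn C π)) := by
    apply card_image_of_injOn
    intro e he f hf hef
    simp only [coe_filter, Set.mem_ofPred_eq] at he hf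
    exact hf.2 e he.1 hef
  rw [nonuniqueLines, ← h, card_sdiff_add_card_eq_card (subset_univ _)]
  simp

lemma mem_nonuniqueLines {C : Finset α} {π : α → Fin n} {e : α} (he : e ∈ C)
    (h : ¬ UniqueOn C π e) : π e ∈ nonuniqueLines C π := by
  classical
  simp only [nonuniqueLines, mem_sdiff, mem_univ, true_and, mem_image, mem_filter]
  rintro ⟨f, ⟨_, hf⟩, hfe⟩
  exact h (hf e he hfe.symm ▸ hf)

open Classical in
/-- Entries unique in neither of two directions are few, because the two lines determine the
entry. -/
lemma card_nonunique_pair_le (C : Finset α) (π ρ : α → Fin n)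
    (hinj : ∀ e ∈ C, ∀ f ∈ C, π e = π f → ρ e = ρ f → e = f) :
    #(C.filter fun e => ¬ UniqueOn C π e ∧ ¬ UniqueOn C ρ e) ≤
      #(nonuniqueLines C π) * #(nonuniqueLines C ρ) := by
  rw [← card_product]
  apply card_le_card_of_injOn (fun e => (π e, ρ e))
  · intro e he
    simp only [coe_filter, Set.mem_ofPred_eq] at he
    simp only [coe_product, Set.mem_prod, mem_coe]
    exact ⟨mem_nonuniqueLines he.1 he.2.1, mem_nonuniqueLines he.1 he.2.2⟩
  · intro e he f hf hef
    simp only [coe_filter, Set.mem_ofPred_eq] at he hf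
    simp only [Prod.mk.injEq] at hef
    exact hinj e he.1 f hf.1 hef.1 hef.2

lemma cover_erase [DecidableEq α] {C : Finset α} {π : α → Fin n} {e : α} (hcov : ∀ i, ∃ f ∈ C, π f = i)
    (h : ¬ UniqueOn C π e) : ∀ i, ∃ f ∈ C.erase e, π f = i := by
  intro i
  obtain ⟨f, hf, rfl⟩ := hcov i
  by_cases hfe : f = e
  · subst hfe
    simp only [UniqueOn, not_forall] at h
    obtain ⟨g, hg, hgf, hne⟩ := h
    exact ⟨g, mem_erase.2 ⟨hne, hg⟩, hgf⟩
  · exact ⟨f, mem_erase.2 ⟨hfe, hf⟩, rfl⟩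

end UniqueLines

lemma exists_unique_line {n : ℕ} {L : Fin n → Fin n → Fin n}
    {C : Finset (Fin n × Fin n × Fin n)} (hC : IsMinimalLSCover L C) :
    ∀ e ∈ C, UniqueOn C (fun e => e.1) e ∨ UniqueOn C (fun e => e.2.1) e ∨
      UniqueOn C (fun e => e.2.2) e := by
  intro e he
  by_contra! h
  obtain ⟨⟨hsub, h1, h2, h3⟩, hmin⟩ := hC
  exact hmin e he ⟨(erase_subset _ _).trans hsub, cover_erase h1 h.1, cover_erase h2 h.2.1,
    cover_erase h3 h.2.2⟩

/-- Double counting of the incidences between the elements of `C` and three properties, sorted by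
how many of the properties hold. The numbers `y₂`, `y₃` count the elements with exactly two,
respectively three, of the properties. -/
lemma exists_count {α : Type} (C : Finset α) (p q w : α → Prop)
    [DecidablePred p] [DecidablePred q] [DecidablePred w] (h : ∀ e ∈ C, p e ∨ q e ∨ w e) :
    ∃ y₂ y₃ : ℕ,
      #C = #(C.filter fun e => ¬ q e ∧ ¬ w e) + #(C.filter fun e => ¬ p e ∧ ¬ w e) +
        #(C.filter fun e => ¬ p e ∧ ¬ q e) + y₂ + y₃ ∧
      #(C.filter p) + #(C.filter q) + #(C.filter w) =
        #(C.filter fun e => ¬ q e ∧ ¬ w e) + #(C.filter fun e => ¬ p e ∧ ¬ w e) +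
        #(C.filter fun e => ¬ p e ∧ ¬ q e) + 2 * y₂ + 3 * y₃ := by
  refine ⟨∑ e ∈ C, if (p e ∧ q e ∧ ¬ w e) ∨ (p e ∧ ¬ q e ∧ w e) ∨ (¬ p e ∧ q e ∧ w e)
      then 1 else 0, ∑ e ∈ C, if p e ∧ q e ∧ w e then 1 else 0, ?_, ?_⟩
  · rw [card_eq_sum_ones C]
    simp only [card_filter, ← sum_add_distrib]
    refine sum_congr rfl fun e he => ?_
    have := h e he
    by_cases hp : p e <;> by_cases hq : q e <;> by_cases hw : w e <;> simp_all
  · simp only [card_filter, ← sum_add_distrib, mul_sum]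
    refine sum_congr rfl fun e he => ?_
    have := h e he
    by_cases hp : p e <;> by_cases hq : q e <;> by_cases hw : w e <;> simp_all

/-- The arithmetic of the proof: `a`, `b`, `d` count the nonunique and `r`, `c`, `s` the unique
lines of each direction, `x₁`, `x₂`, `x₃` the entries with a single unique line, `y₂`, `y₃` those
with two and three, and `k` all entries of the cover. -/
lemma quadratic_bound {n k a b d r c s x₁ x₂ x₃ y₂ y₃ : ℤ}
    (ha : 0 ≤ a) (hb : 0 ≤ b) (hd : 0 ≤ d) (hy₂ : 0 ≤ y₂) (hy₃ : 0 ≤ y₃)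
    (hr : a + r = n) (hc : b + c = n) (hs : d + s = n)
    (hx₁0 : 0 ≤ x₁) (hx₂0 : 0 ≤ x₂) (hx₃0 : 0 ≤ x₃)
    (hx₁ : x₁ ≤ b * d) (hx₂ : x₂ ≤ a * d) (hx₃ : x₃ ≤ a * b)
    (hk : k = x₁ + x₂ + x₃ + y₂ + y₃) (hrcs : r + c + s = x₁ + x₂ + x₃ + 2 * y₂ + 3 * y₃)
    (hzero : a = 0 → b = 0 → d = 0 → r = k) :
    0 ≤ 3 * n - k ∧ 9 * n ≤ (3 * n - k) ^ 2 + 3 * (3 * n - k) := by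
  obtain ⟨t, ht⟩ : ∃ t, t = a + b + d := ⟨_, rfl⟩
  obtain ⟨y, hy⟩ : ∃ y, y = y₂ + 2 * y₃ := ⟨_, rfl⟩
  have hm : 3 * n - k = t + y := by linarith
  have hn : 3 * n ≤ t + (a * b + b * d + a * d) + 2 * y₂ + 3 * y₃ := by linarith
  have hq : 3 * (a * b + b * d + a * d) ≤ t ^ 2 := by
    subst ht
    nlinarith [sq_nonneg (a - b), sq_nonneg (b - d), sq_nonneg (a - d)]
  rw [hm]
  refine ⟨by linarith, ?_⟩
  suffices h : 3 * (y₂ + y₃) ≤ 2 * t * y + y ^ 2 by nlinarith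
  rcases (show t = 0 ∨ 1 ≤ t by omega) with h0 | h1
  · have ha0 : a = 0 := by omega
    have hb0 : b = 0 := by omega
    have hd0 : d = 0 := by omega
    subst ha0 hb0 hd0
    have := hzero rfl rfl rfl
    have hy20 : y₂ = 0 := by omega
    subst hy20 h0
    rcases (show y₃ = 0 ∨ 1 ≤ y₃ by omega) with h | h
    · subst hy h; norm_num
    · subst hy; nlinarith
  · rcases (show y = 0 ∨ 1 ≤ y by omega) with h | h
    · have : y₂ + y₃ = 0 := by omega
      rw [this, h]; norm_num
    · have hle : y₂ + y₃ ≤ y := by omega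
      have h2 : y ≤ t * y := le_mul_of_one_le_left (by omega) h1
      have h3 : y ≤ y ^ 2 := le_self_pow₀ h two_ne_zero
      linarith

/-- Every minimal cover of a Latin square of order `n` has size at most
`⌊3(n + 1/2 - √(n + 1/4))⌋`. -/
theorem stmt15 {n : ℕ} (L : Fin n → Fin n → Fin n) (hL : IsLatin L)
    (C : Finset (Fin n × Fin n × Fin n)) (hC : IsMinimalLSCover L C) :
    (C.card : ℤ) ≤ ⌊(3 : ℝ) * ((n : ℝ) + 1 / 2 - Real.sqrt ((n : ℝ) + 1 / 4))⌋ := by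
  classical
  have hent : ∀ e ∈ C, L e.1 e.2.1 = e.2.2 := by
    intro e he
    have := hC.1.1 he
    simp only [lsEntries, mem_image, mem_univ, true_and] at this
    obtain ⟨p, rfl⟩ := this
    rfl
  -- The Latin property: any two coordinates of an entry determine the third.
  have h12 : ∀ e ∈ C, ∀ f ∈ C, e.1 = f.1 → e.2.1 = f.2.1 → e = f := by
    rintro ⟨i, j, s⟩ he ⟨i', j', s'⟩ hf h1 h2
    have h3 := hent _ he
    have h4 := hent _ hf
    simp only at h1 h2 h3 h4
    subst h1 h2 h3 h4
    rfl
  have h13 : ∀ e ∈ C, ∀ f ∈ C, e.1 = f.1 → e.2.2 = f.2.2 → e = f := by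
    intro e he f hf h1 h2
    refine h12 e he f hf h1 ((hL.1 e.1).1 ?_)
    change L e.1 e.2.1 = L e.1 f.2.1
    rw [hent e he, h2, h1, hent f hf]
  have h23 : ∀ e ∈ C, ∀ f ∈ C, e.2.1 = f.2.1 → e.2.2 = f.2.2 → e = f := by
    intro e he f hf h1 h2
    refine h12 e he f hf ((hL.2 e.2.1).1 ?_) h1
    change L e.1 e.2.1 = L f.1 e.2.1
    rw [hent e he, h2, h1, hent f hf]
  obtain ⟨y₂, y₃, hk, hrcs⟩ := exists_count C _ _ _ (exists_unique_line hC)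
  have hr := card_nonuniqueLines_add C (fun e => e.1)
  have hc := card_nonuniqueLines_add C (fun e => e.2.1)
  have hs := card_nonuniqueLines_add C (fun e => e.2.2)
  have hx₁ := card_nonunique_pair_le C (fun e => e.2.1) (fun e => e.2.2) h23
  have hx₂ := card_nonunique_pair_le C (fun e => e.1) (fun e => e.2.2) h13
  have hx₃ := card_nonunique_pair_le C (fun e => e.1) (fun e => e.2.1) h12
  -- Without nonunique rows every entry is alone in its row.
  have hzero : #(nonuniqueLines C fun e => e.1) = 0 →
      #(C.filter (UniqueOn C fun e => e.1)) = #C := by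
    intro h0
    rw [card_eq_zero] at h0
    congr 1
    refine filter_true_of_mem fun e he => ?_
    by_contra hne
    have := mem_nonuniqueLines he hne
    simp [h0] at this
  obtain ⟨hm0, hquad⟩ := quadratic_bound (n := n) (k := #C)
    (r := #(C.filter (UniqueOn C fun e => e.1))) (c := #(C.filter (UniqueOn C fun e => e.2.1)))
    (s := #(C.filter (UniqueOn C fun e => e.2.2))) (Int.natCast_nonneg _)
    (Int.natCast_nonneg _) (Int.natCast_nonneg _) (Int.natCast_nonneg y₂) (Int.natCast_nonneg y₃)
    (mod_cast hr) (mod_cast hc) (mod_cast hs)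
    (Int.natCast_nonneg _) (Int.natCast_nonneg _) (Int.natCast_nonneg _)
    (mod_cast hx₁) (mod_cast hx₂) (mod_cast hx₃) (mod_cast hk) (mod_cast hrcs)
    (fun h _ _ => mod_cast hzero (mod_cast h))
  rw [Int.le_floor]
  have hm0' : (0 : ℝ) ≤ 3 * n - #C := by exact_mod_cast hm0
  have hquad' : (9 : ℝ) * n ≤ (3 * n - #C) ^ 2 + 3 * (3 * n - #C) := by exact_mod_cast hquad
  have hsqrt : Real.sqrt ((n : ℝ) + 1 / 4) ≤ (3 * n - #C) / 3 + 1 / 2 := by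
    apply Real.sqrt_le_iff.2
    constructor
    · positivity
    · nlinarith
  push_cast
  linarith
end

section
/- For every integer t ≥ 2 there exists a Latin square of order n = t² + t that contains a minimal c-cover for every integer c with t² + t ≤ c ≤ 3t². -/
/-! ### Families of entries with private lines -/

/-- The entries `f k`, `k ∈ J`, of `L` meet every line, and each of them has a private line,
that is, a line met by no other member of the family. In particular they are distinct. -/
def IsIrredundantCover {ι κ : Type} (L : ι → ι → ι) (J : Finset κ) (f : κ → ι × ι × ι) : Prop :=
  (∀ k ∈ J, L (f k).1 (f k).2.1 = (f k).2.2) ∧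
  (∀ i, ∃ k ∈ J, (f k).1 = i) ∧ (∀ i, ∃ k ∈ J, (f k).2.1 = i) ∧ (∀ i, ∃ k ∈ J, (f k).2.2 = i) ∧
  ∀ k ∈ J, (∀ l ∈ J, (f l).1 = (f k).1 → l = k) ∨ (∀ l ∈ J, (f l).2.1 = (f k).2.1 → l = k) ∨
    (∀ l ∈ J, (f l).2.2 = (f k).2.2 → l = k)

/-- An irredundant family is a minimal cover, also after renaming the index set along `e`. -/
theorem IsIrredundantCover.exists_minimal {ι ι' κ : Type} [Fintype ι'] [DecidableEq ι']
    {L : ι → ι → ι} {J : Finset κ} {f : κ → ι × ι × ι} (h : IsIrredundantCover L J f) (e : ι ≃ ι') :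
    ∃ C : Finset (ι' × ι' × ι'),
      IsMinimalLSCover (fun i j => e (L (e.symm i) (e.symm j))) C ∧ C.card = J.card := by
  obtain ⟨hL, h1, h2, h3, hp⟩ := h
  let g : κ → ι' × ι' × ι' := fun k => (e (f k).1, e (f k).2.1, e (f k).2.2)
  refine ⟨J.image g, ⟨⟨?_, ?_, ?_, ?_⟩, ?_⟩, ?_⟩
  · intro x hx
    obtain ⟨k, hk, rfl⟩ := Finset.mem_image.1 hx
    exact Finset.mem_image.2 ⟨(e (f k).1, e (f k).2.1), Finset.mem_univ _, by simp [g, hL k hk]⟩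
  · intro i
    obtain ⟨k, hk, hi⟩ := h1 (e.symm i)
    exact ⟨g k, Finset.mem_image_of_mem _ hk, by simp [g, hi]⟩
  · intro i
    obtain ⟨k, hk, hi⟩ := h2 (e.symm i)
    exact ⟨g k, Finset.mem_image_of_mem _ hk, by simp [g, hi]⟩
  · intro i
    obtain ⟨k, hk, hi⟩ := h3 (e.symm i)
    exact ⟨g k, Finset.mem_image_of_mem _ hk, by simp [g, hi]⟩
  · intro x hx hC
    obtain ⟨k, hk, rfl⟩ := Finset.mem_image.1 hx
    obtain ⟨-, c1, c2, c3⟩ := hC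
    rcases hp k hk with hp | hp | hp
    · obtain ⟨y, hy, hyk⟩ := c1 (g k).1
      obtain ⟨hne, hy⟩ := Finset.mem_erase.1 hy
      obtain ⟨l, hl, rfl⟩ := Finset.mem_image.1 hy
      exact hne (by rw [hp l hl (e.injective hyk)])
    · obtain ⟨y, hy, hyk⟩ := c2 (g k).2.1
      obtain ⟨hne, hy⟩ := Finset.mem_erase.1 hy
      obtain ⟨l, hl, rfl⟩ := Finset.mem_image.1 hy
      exact hne (by rw [hp l hl (e.injective hyk)])
    · obtain ⟨y, hy, hyk⟩ := c3 (g k).2.2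
      obtain ⟨hne, hy⟩ := Finset.mem_erase.1 hy
      obtain ⟨l, hl, rfl⟩ := Finset.mem_image.1 hy
      exact hne (by rw [hp l hl (e.injective hyk)])
  · apply Finset.card_image_of_injOn
    intro l hl k hk hlk
    simp only [g, Prod.mk.injEq, e.injective.eq_iff] at hlk
    rcases hp k hk with hp | hp | hp
    · exact hp l hl hlk.1
    · exact hp l hl hlk.2.1
    · exact hp l hl hlk.2.2

theorem IsLatin.transport {ι ι' : Type} {L : ι → ι → ι} (h : IsLatin L) (e : ι ≃ ι') :
    IsLatin (fun i j => e (L (e.symm i) (e.symm j))) :=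
  ⟨fun i => e.bijective.comp ((h.1 (e.symm i)).comp e.symm.bijective),
    fun j => e.bijective.comp ((h.2 (e.symm j)).comp e.symm.bijective)⟩

/-! ### Order 6 -/

/-- A Latin square of order 6 with minimal covers of all sizes from 6 to 12. -/
def smallSquare : Fin 6 → Fin 6 → Fin 6 :=
  ![![2, 3, 0, 1, 4, 5], ![4, 5, 3, 2, 0, 1], ![0, 4, 2, 5, 1, 3],
    ![1, 2, 5, 0, 3, 4], ![3, 0, 1, 4, 5, 2], ![5, 1, 4, 3, 2, 0]]

theorem smallSquare_latin : IsLatin smallSquare := by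
  unfold IsLatin Function.Bijective Function.Injective Function.Surjective
  decide

/-- For each size, the cells of a minimal cover of `smallSquare`. -/
theorem smallSquare_covers (c : ℕ) (h6 : 6 ≤ c) (h12 : c ≤ 12) :
    ∃ J : Finset (Fin 6 × Fin 6),
      IsIrredundantCover smallSquare J (fun p => (p.1, p.2, smallSquare p.1 p.2)) ∧ J.card = c := by
  unfold IsIrredundantCover
  interval_cases c
  · exact ⟨{(0, 0), (1, 4), (2, 5), (3, 2), (4, 3), (5, 1)}, by decide, by decide⟩
  · exact ⟨{(0, 5), (1, 2), (2, 0), (3, 1), (4, 2), (4, 3), (5, 4)}, by decide, by decide⟩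
  · exact ⟨{(0, 0), (1, 3), (2, 0), (3, 4), (4, 4), (4, 5), (5, 1), (5, 2)}, by decide, by decide⟩
  · exact ⟨{(0, 0), (0, 4), (1, 1), (2, 0), (2, 5), (3, 5), (4, 2), (4, 3), (5, 0)},
      by decide, by decide⟩
  · exact ⟨{(0, 1), (0, 2), (0, 3), (1, 0), (1, 1), (1, 5), (2, 4), (3, 0), (4, 1), (5, 4)},
      by decide, by decide⟩
  · exact ⟨{(0, 0), (0, 1), (0, 2), (1, 0), (1, 1), (1, 4), (2, 0), (3, 3), (4, 1), (5, 1),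
      (5, 5)}, by decide, by decide⟩
  · exact ⟨{(0, 0), (0, 1), (0, 2), (0, 3), (1, 0), (1, 1), (1, 4), (1, 5), (2, 0), (3, 0),
      (4, 1), (5, 1)}, by decide, by decide⟩

/-! ### The square for `t ≥ 3` -/

section Big

variable {Z : Type} [CommRing Z] [DecidableEq Z]

/-- The Latin square on `Z ⊔ Z²`. The cells `((a, b), (c, b))` of the large block, for fixed `b`,
carry the relabelled cyclic square `l b (a + c)` on small symbols, except where `a + c = s b`; the
array is Latin when the symbol omitted there is `l b (s b) = b`. -/
def bigSquare (s : Equiv.Perm Z) (l : Z → Equiv.Perm Z) :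
    Z ⊕ Z × Z → Z ⊕ Z × Z → Z ⊕ Z × Z
  | .inl r, .inl c => .inr (r, c)
  | .inl r, .inr (c, d) => if r = c then .inl d else .inr (c, s d - r)
  | .inr (a, b), .inl c => if c = a then .inl b else .inr (s b - c, a)
  | .inr (a, b), .inr (c, d) =>
      if d = b ∧ a + c ≠ s b then .inl (l b (a + c)) else .inr (c + d - b, a + b - d)

theorem bigSquare_latin [Finite Z] (s : Equiv.Perm Z) (l : Z → Equiv.Perm Z)
    (hl : ∀ b, l b (s b) = b) : IsLatin (bigSquare s l) := by
  have hs : ∀ x y, s x = s y → x = y := fun x y h => s.injective h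
  have hli : ∀ b x y, l b x = l b y → x = y := fun b x y h => (l b).injective h
  have hl' : ∀ b x, l b x = b → x = s b := fun b x h => (l b).injective (h.trans (hl b).symm)
  constructor
  · intro i
    rw [← Finite.injective_iff_bijective]
    intro j k h
    rcases i with r | ⟨a, b⟩ <;> rcases j with c | ⟨c, d⟩ <;> rcases k with c' | ⟨c', d'⟩ <;>
      simp only [bigSquare] at h <;> grind
  · intro i
    rw [← Finite.injective_iff_bijective]
    intro j k h
    rcases i with r | ⟨a, b⟩ <;> rcases j with c | ⟨c, d⟩ <;> rcases k with c' | ⟨c', d'⟩ <;>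
      simp only [bigSquare] at h <;> grind

/-- The entry `V (x, y)`: a transversal consists of all of these and the `A (x, x)`. -/
def entryV (p : Z × Z) : (Z ⊕ Z × Z) × (Z ⊕ Z × Z) × (Z ⊕ Z × Z) :=
  (.inr p, .inr (p.2, p.1), if p.1 = p.2 then .inl (p.1 + 1) else .inr p)

theorem bigSquare_entryV (s : Equiv.Perm Z) (l : Z → Equiv.Perm Z)
    (hs : ∀ i, s i ≠ i + i) (hl1 : ∀ b, l b (b + b) = b + 1) (p : Z × Z) :
    bigSquare s l (entryV p).1 (entryV p).2.1 = (entryV p).2.2 := by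
  obtain ⟨x, y⟩ := p
  by_cases h : x = y
  · subst h
    simp [entryV, bigSquare, hl1, (hs x).symm]
  · simp [entryV, bigSquare, h]

/-- The entries `A p`, `D p`, `B p`, `V p`, in this order. -/
def entryABDV : (Z × Z) ⊕ (Z × Z) ⊕ (Z × Z) ⊕ (Z × Z) →
    (Z ⊕ Z × Z) × (Z ⊕ Z × Z) × (Z ⊕ Z × Z)
  | .inl p => (.inl p.1, .inl p.2, .inr p)
  | .inr (.inl p) => (.inr p, .inl p.1, .inl p.2)
  | .inr (.inr (.inl p)) => (.inl p.2, .inr (p.2, p.1), .inl p.1)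
  | .inr (.inr (.inr p)) => entryV p

/-- The cover obtained by replacement at the pairs in `O` (off the diagonal) and at the pairs
`(x, x)` with `x ∈ D`. The hypothesis `hcov` ensures that all small symbols are covered: `u` is
the symbol of `V (u - 1, u - 1)` and of every `D (a, u)`. -/
theorem replacement_cover [Fintype Z] (s : Equiv.Perm Z) (l : Z → Equiv.Perm Z)
    (hs : ∀ i, s i ≠ i + i) (hl1 : ∀ b, l b (b + b) = b + 1)
    (D : Finset Z) (O : Finset (Z × Z)) (hO : ∀ p ∈ O, p.1 ≠ p.2)
    (hcov : ∀ u : Z, u - 1 ∈ D ∨ ∃ a, (a, u) ∉ O ∧ (a = u → a ∉ D)) :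
    ∃ J : Finset ((Z × Z) ⊕ (Z × Z) ⊕ (Z × Z) ⊕ (Z × Z)),
      IsIrredundantCover (bigSquare s l) J entryABDV ∧
        J.card + 2 * O.card + D.card = 3 * Fintype.card Z ^ 2 := by
  let W : Finset (Z × Z) := O ∪ D.image fun x => (x, x)
  have hW : ∀ x y, (x, y) ∈ W ↔ (x, y) ∈ O ∨ (x = y ∧ x ∈ D) := by
    intro x y
    simp only [W, Finset.mem_union, Finset.mem_image, Prod.mk.injEq]
    grind
  have hWc : W.card = O.card + D.card := by
    rw [Finset.card_union_of_disjoint, Finset.card_image_of_injective]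
    · intro x y h
      exact (Prod.mk.inj h).1
    · rw [Finset.disjoint_left]
      intro p hp hq
      obtain ⟨x, -, rfl⟩ := Finset.mem_image.1 hq
      exact hO _ hp rfl
  have hO' : ∀ x y, (x, y) ∈ O → x ≠ y := fun x y h => hO _ h
  clear_value W
  refine ⟨Oᶜ.disjSum (Wᶜ.disjSum (Wᶜ.disjSum W)), ⟨?_, ?_, ?_, ?_, ?_⟩, ?_⟩
  · rintro (p | p | p | p) -
    · simp [entryABDV, bigSquare]
    · simp [entryABDV, bigSquare]
    · simp [entryABDV, bigSquare]
    · exact bigSquare_entryV s l hs hl1 p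
  · rintro (r | ⟨x, y⟩)
    · exact ⟨.inl (r, r), by simp; grind, by simp [entryABDV]⟩
    · by_cases h : (x, y) ∈ W
      · exact ⟨.inr (.inr (.inr (x, y))), by simpa using h, by simp [entryABDV, entryV]⟩
      · exact ⟨.inr (.inl (x, y)), by simpa using h, by simp [entryABDV]⟩
  · rintro (r | ⟨y, x⟩)
    · exact ⟨.inl (r, r), by simp; grind, by simp [entryABDV]⟩
    · by_cases h : (x, y) ∈ W
      · exact ⟨.inr (.inr (.inr (x, y))), by simpa using h, by simp [entryABDV, entryV]⟩
      · exact ⟨.inr (.inr (.inl (x, y))), by simpa using h, by simp [entryABDV]⟩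
  · rintro (u | ⟨x, y⟩)
    · rcases hcov u with h | ⟨a, ha, ha'⟩
      · exact ⟨.inr (.inr (.inr (u - 1, u - 1))), by simp [hW, h], by simp [entryABDV, entryV]⟩
      · exact ⟨.inr (.inl (a, u)), by simp [hW]; grind, by simp [entryABDV]⟩
    · by_cases h : (x, y) ∈ O
      · exact ⟨.inr (.inr (.inr (x, y))), by simp [hW, h], by simp [entryABDV, entryV, hO' x y h]⟩
      · exact ⟨.inl (x, y), by simpa using h, by simp [entryABDV]⟩
  · rintro (⟨x, y⟩ | ⟨x, y⟩ | ⟨x, y⟩ | ⟨x, y⟩) hk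
    -- The private lines are the symbol of `A`, the row of `D`, the column of `B`, the row of `V`.
    · right; right
      rintro (⟨x', y'⟩ | ⟨x', y'⟩ | ⟨x', y'⟩ | ⟨x', y'⟩) hl <;>
        simp [entryABDV, entryV, hW] at hk hl ⊢ <;> grind
    · left
      rintro (⟨x', y'⟩ | ⟨x', y'⟩ | ⟨x', y'⟩ | ⟨x', y'⟩) hl <;>
        simp [entryABDV, entryV, hW] at hk hl ⊢ <;> grind
    · right; left
      rintro (⟨x', y'⟩ | ⟨x', y'⟩ | ⟨x', y'⟩ | ⟨x', y'⟩) hl <;>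
        simp [entryABDV, entryV, hW] at hk hl ⊢ <;> grind
    · left
      rintro (⟨x', y'⟩ | ⟨x', y'⟩ | ⟨x', y'⟩ | ⟨x', y'⟩) hl <;>
        simp [entryABDV, entryV, hW] at hk hl ⊢ <;> grind
  · have h1 := Finset.card_le_univ W
    have h2 := Finset.card_le_univ O
    simp only [Finset.card_disjSum, Finset.card_compl, hWc] at h1 ⊢
    rw [Fintype.card_prod, ← sq] at *
    omega

/-- The entries used in `near_cover`: the `A (x, x)`, the `V p`, and three more. -/
def entryNear (a : Z) : Z ⊕ (Z × Z) ⊕ Fin 3 → (Z ⊕ Z × Z) × (Z ⊕ Z × Z) × (Z ⊕ Z × Z)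
  | .inl x => (.inl x, .inl x, .inr (x, x))
  | .inr (.inl p) => entryV p
  | .inr (.inr 0) => (.inr (1, 1), .inl 1, .inl 1)
  | .inr (.inr 1) => (.inr (0, 0), .inr (1, 1), .inr (1 + 1, -1))
  | .inr (.inr 2) => (.inr (a, 0), .inr (0, 0), .inl (1 + 1))

/-- From the transversal formed by the `A (x, x)` and all `V p`, remove `V (0, 0)` and `V (1, 1)`;
of the lines that become uncovered, `D (1, 1)` covers row `(1, 1)` and symbol `1`, the cell
`((0, 0), (1, 1))` covers its row and column, and the occurrence of the small symbol `2` in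
column `(0, 0)` covers that symbol and that column. -/
theorem near_cover [Fintype Z] (s : Equiv.Perm Z) (l : Z → Equiv.Perm Z)
    (hs : ∀ i, s i ≠ i + i) (hl : ∀ b, l b (s b) = b) (hl1 : ∀ b, l b (b + b) = b + 1)
    (h01 : (1 : Z) ≠ 0) (h02 : (1 + 1 : Z) ≠ 0) :
    ∃ (a : Z) (J : Finset (Z ⊕ (Z × Z) ⊕ Fin 3)),
      IsIrredundantCover (bigSquare s l) J (entryNear a) ∧
        J.card = Fintype.card Z ^ 2 + Fintype.card Z + 1 := by
  obtain ⟨a, ha⟩ := (l 0).surjective (1 + 1)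
  have ha0 : a ≠ 0 := by
    rintro rfl
    have := hl1 0
    rw [add_zero, zero_add, ha] at this
    exact h01 (by simpa using this)
  have has : a ≠ s 0 := by
    rintro rfl
    exact h02 (ha.symm.trans (hl 0))
  let W : Finset (Z × Z) := {(0, 0), (1, 1)}
  have hW : ∀ x y, (x, y) ∈ W ↔ (x = 0 ∧ y = 0) ∨ (x = 1 ∧ y = 1) := by simp [W]
  have hWc : W.card = 2 := by
    rw [Finset.card_pair]
    simp [h01.symm]
  clear_value W
  refine ⟨a, Finset.univ.disjSum (Wᶜ.disjSum Finset.univ), ⟨?_, ?_, ?_, ?_, ?_⟩, ?_⟩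
  · rintro (x | ⟨x, y⟩ | k) -
    · simp [entryNear, bigSquare]
    · exact bigSquare_entryV s l hs hl1 (x, y)
    · fin_cases k
      · simp [entryNear, bigSquare]
      · simp [entryNear, bigSquare, h01]
      · simp [entryNear, bigSquare, has, ha]
  · rintro (r | ⟨x, y⟩)
    · exact ⟨.inl r, by simp, by simp [entryNear]⟩
    · by_cases h : (x, y) ∈ W
      · rcases (hW x y).1 h with ⟨rfl, rfl⟩ | ⟨rfl, rfl⟩
        · exact ⟨.inr (.inr 1), by simp, by simp [entryNear]⟩
        · exact ⟨.inr (.inr 0), by simp, by simp [entryNear]⟩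
      · exact ⟨.inr (.inl (x, y)), by simpa using h, by simp [entryNear, entryV]⟩
  · rintro (r | ⟨y, x⟩)
    · exact ⟨.inl r, by simp, by simp [entryNear]⟩
    · by_cases h : (x, y) ∈ W
      · rcases (hW x y).1 h with ⟨rfl, rfl⟩ | ⟨rfl, rfl⟩
        · exact ⟨.inr (.inr 2), by simp, by simp [entryNear]⟩
        · exact ⟨.inr (.inr 1), by simp, by simp [entryNear]⟩
      · exact ⟨.inr (.inl (x, y)), by simpa using h, by simp [entryNear, entryV]⟩
  · rintro (u | ⟨x, y⟩)
    · by_cases h1 : u = 1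
      · exact ⟨.inr (.inr 0), by simp, by simp [entryNear, h1]⟩
      · by_cases h2 : u = 1 + 1
        · exact ⟨.inr (.inr 2), by simp, by simp [entryNear, h2]⟩
        · exact ⟨.inr (.inl (u - 1, u - 1)), by simp [hW]; grind, by simp [entryNear, entryV]⟩
    · by_cases h : x = y
      · exact ⟨.inl x, by simp, by simp [entryNear, h]⟩
      · exact ⟨.inr (.inl (x, y)), by simp [hW]; grind, by simp [entryNear, entryV, h]⟩
  · rintro (x | ⟨x, y⟩ | k) hk
    · left
      rintro (x' | ⟨x', y'⟩ | k') hl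
      · simp [entryNear]
      · simp [entryNear, entryV]
      · fin_cases k' <;> simp [entryNear]
    · -- On the diagonal the symbol of `V` is private, off the diagonal its column.
      by_cases hxy : x = y
      · right; right
        rintro (x' | ⟨x', y'⟩ | k') hl
        · simp [entryNear, entryV, hxy]
        · simp [entryNear, entryV]; grind
        · fin_cases k' <;> simp [entryNear, entryV, hW] at hk ⊢ <;> grind
      · right; left
        rintro (x' | ⟨x', y'⟩ | k') hl
        · simp [entryNear, entryV]
        · simp [entryNear, entryV]; grind
        · fin_cases k' <;> simp [entryNear, entryV, hW] at hk ⊢ <;> grind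
    · fin_cases k
      · left
        rintro (x' | ⟨x', y'⟩ | k') hl
        · simp [entryNear]
        · simp [entryNear, entryV, hW] at hl ⊢; grind
        · fin_cases k' <;> simp [entryNear] <;> grind
      · left
        rintro (x' | ⟨x', y'⟩ | k') hl
        · simp [entryNear]
        · simp [entryNear, entryV, hW] at hl ⊢; grind
        · fin_cases k' <;> simp [entryNear] <;> grind
      · right; left
        rintro (x' | ⟨x', y'⟩ | k') hl
        · simp [entryNear]
        · simp [entryNear, entryV, hW] at hl ⊢; grind
        · fin_cases k' <;> simp [entryNear] <;> grind
  · have h1 := Finset.card_le_univ W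
    simp only [Finset.card_disjSum, Finset.card_compl, hWc, Finset.card_univ, Fintype.card_fin]
      at h1 ⊢
    rw [Fintype.card_prod, ← sq] at *
    omega

end Big

/-! ### Choice of the replacements and conclusion -/

/-- Every saving `k` from `0` to `2t² - t`, other than `2t² - t - 1`, is realised by replacements
that leave all small symbols covered. -/
theorem exists_replacement {Z : Type} [CommRing Z] [DecidableEq Z] [Fintype Z]
    (h01 : (1 : Z) ≠ 0) (k : ℕ)
    (hk : k + Fintype.card Z ≤ 2 * Fintype.card Z ^ 2)
    (hk' : k + Fintype.card Z + 1 ≠ 2 * Fintype.card Z ^ 2) :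
    ∃ (D : Finset Z) (O : Finset (Z × Z)), (∀ p ∈ O, p.1 ≠ p.2) ∧
      (∀ u : Z, u - 1 ∈ D ∨ ∃ a, (a, u) ∉ O ∧ (a = u → a ∉ D)) ∧
      2 * O.card + D.card = k := by
  set t := Fintype.card Z with ht
  have hoff : (Finset.univ : Finset Z).offDiag.card = t ^ 2 - t := by
    rw [Finset.offDiag_card, Finset.card_univ, sq]
  have ht0 : 0 < t := Fintype.card_pos
  have htt : t ≤ t ^ 2 := Nat.le_self_pow two_ne_zero t
  rcases le_or_gt k t with hkt | hkt
  · obtain ⟨D, -, hD⟩ := Finset.exists_subset_card_eq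
      (s := (Finset.univ : Finset Z)) (n := k) (by simpa using hkt)
    refine ⟨D, ∅, by simp, fun u => Or.inr ⟨u + 1, by simp, fun h => ?_⟩, by simpa using hD⟩
    exact absurd (by simpa using h) h01
  rcases Nat.even_or_odd' (k - t) with ⟨m, hm | hm⟩
  · obtain ⟨O, hO, hOc⟩ := Finset.exists_subset_card_eq
      (s := (Finset.univ : Finset Z).offDiag) (n := m) (by rw [hoff]; omega)
    refine ⟨Finset.univ, O, fun p hp => by simpa using hO hp, by simp, ?_⟩
    rw [Finset.card_univ]
    omega
  · -- `V (0, 0)` and `V (0, 1)` are not used, so that `D (0, 1)` covers the symbol `1`.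
    have hmem : ((0, 1) : Z × Z) ∈ (Finset.univ : Finset Z).offDiag := by simp [h01.symm]
    obtain ⟨O, hO, hOc⟩ := Finset.exists_subset_card_eq
      (s := (Finset.univ : Finset Z).offDiag.erase (0, 1)) (n := m + 1)
      (by rw [Finset.card_erase_of_mem hmem, hoff]; omega)
    have hO' := fun p hp => Finset.mem_erase.1 (hO (x := p) hp)
    refine ⟨Finset.univ.erase 0, O, fun p hp => by simpa using (hO' p hp).2, fun u => ?_, ?_⟩
    · by_cases hu : u = 1
      · exact Or.inr ⟨0, fun h => (hO' _ h).1 (by rw [hu]), by simp⟩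
      · exact Or.inl (by simpa [sub_eq_zero] using hu)
    · rw [Finset.card_erase_of_mem (Finset.mem_univ _), Finset.card_univ]
      omega

theorem exists_perm_pair {Z : Type} [DecidableEq Z] {x y u v : Z} (hxy : x ≠ y) (huv : u ≠ v) :
    ∃ e : Equiv.Perm Z, e x = u ∧ e y = v := by
  refine ⟨Equiv.swap (Equiv.swap x u y) v * Equiv.swap x u, ?_, by simp⟩
  have h : u ≠ Equiv.swap x u y := fun h => hxy (by
    have := congrArg (Equiv.swap x u) h
    simpa using this)
  simp [Equiv.swap_apply_of_ne_of_ne h huv]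

/-- For every `t ≥ 2` there is a Latin square of order `n = t² + t` containing a
minimal `c`-cover for every `c` with `t² + t ≤ c ≤ 3t²`. -/
theorem stmt16 (t : ℕ) (ht : 2 ≤ t) :
    ∃ L : Fin (t ^ 2 + t) → Fin (t ^ 2 + t) → Fin (t ^ 2 + t),
      IsLatin L ∧
        ∀ c : ℕ, t ^ 2 + t ≤ c → c ≤ 3 * t ^ 2 →
          ∃ C : Finset (Fin (t ^ 2 + t) × Fin (t ^ 2 + t) × Fin (t ^ 2 + t)),
            IsMinimalLSCover L C ∧ C.card = c := by
  rcases ht.eq_or_lt with rfl | ht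
  · refine ⟨_, smallSquare_latin.transport (Equiv.refl (Fin 6)), fun c h1 h2 => ?_⟩
    obtain ⟨J, hJ, rfl⟩ := smallSquare_covers c h1 h2
    exact hJ.exists_minimal (Equiv.refl (Fin 6))
  have : NeZero t := ⟨by omega⟩
  have hcard : Fintype.card (ZMod t) = t := ZMod.card t
  have h01 : (1 : ZMod t) ≠ 0 := by
    have : Fact (1 < t) := ⟨by omega⟩
    exact one_ne_zero
  have h02 : (1 + 1 : ZMod t) ≠ 0 := by
    intro h
    have h2 : ((2 : ℕ) : ZMod t) = 0 := by
      push_cast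
      rw [← h]
      norm_num
    exact absurd (Nat.le_of_dvd (by norm_num) ((ZMod.natCast_eq_zero_iff _ _).1 h2)) (by omega)
  obtain ⟨s, hs⟩ : ∃ s : Equiv.Perm (ZMod t), ∀ i, s i ≠ i + i := by
    refine ⟨Equiv.swap 0 1, fun i => ?_⟩
    rw [Equiv.swap_apply_def]
    split_ifs <;> grind
  have hex : ∀ b : ZMod t, ∃ e : Equiv.Perm (ZMod t), e (s b) = b ∧ e (b + b) = b + 1 :=
    fun b => exists_perm_pair (hs b) (by simpa using h01)
  choose l hl hl1 using hex
  have e : ZMod t ⊕ ZMod t × ZMod t ≃ Fin (t ^ 2 + t) :=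
    Fintype.equivFinOfCardEq (by simp [hcard]; ring)
  refine ⟨_, (bigSquare_latin s l hl).transport e, fun c hc1 hc2 => ?_⟩
  by_cases hc : c = t ^ 2 + t + 1
  · obtain ⟨a, J, hJ, hJc⟩ := near_cover s l hs hl hl1 h01 h02
    obtain ⟨C, hC, hCc⟩ := hJ.exists_minimal e
    exact ⟨C, hC, by rw [hCc, hJc, hcard, hc]⟩
  · obtain ⟨D, O, hO, hcov, hsum⟩ := exists_replacement h01 (3 * t ^ 2 - c)
      (by rw [hcard]; omega) (by rw [hcard]; omega)
    obtain ⟨J, hJ, hJc⟩ := replacement_cover s l hs hl1 D O hO hcov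
    obtain ⟨C, hC, hCc⟩ := hJ.exists_minimal e
    refine ⟨C, hC, ?_⟩
    rw [hcard] at hJc
    omega
end

section
/- Let L be a Latin square of order n and let P be a partial minimal cover of L. Then L contains a minimal cover of size at least |P|. -/
/-- An entry of `P` is redundant if `P` contains three other entries sharing
respectively its row, its column and its symbol. -/
def IsRedundantIn {ι : Type} [Fintype ι] [DecidableEq ι]
    (e : ι × ι × ι) (P : Finset (ι × ι × ι)) : Prop :=
  (∃ f ∈ P, f ≠ e ∧ f.1 = e.1) ∧ (∃ f ∈ P, f ≠ e ∧ f.2.1 = e.2.1) ∧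
    (∃ f ∈ P, f ≠ e ∧ f.2.2 = e.2.2)

/-- A partial minimal cover: a set of entries with no redundant entry. -/
def IsPartialMinimalCover {ι : Type} [Fintype ι] [DecidableEq ι] (L : ι → ι → ι)
    (P : Finset (ι × ι × ι)) : Prop :=
  P ⊆ lsEntries L ∧ ∀ e ∈ P, ¬ IsRedundantIn e P

/-- Redundancy of `e` in `P` with respect to three abstract coordinates: each coordinate of `e`
is also attained by another element of `P`. -/
def Redund {T ι : Type} (a b c : T → ι) (e : T) (P : Finset T) : Prop :=
  (∃ f ∈ P, f ≠ e ∧ a f = a e) ∧ (∃ f ∈ P, f ≠ e ∧ b f = b e) ∧ (∃ f ∈ P, f ≠ e ∧ c f = c e)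

/-- The number of lines represented by `P`. -/
def lineCount {T ι : Type} [DecidableEq ι] (a b c : T → ι) (P : Finset T) : ℕ :=
  (P.image a).card + (P.image b).card + (P.image c).card

/-- An entry `e` on the missed line `r` such that, for one of the other two directions, no element
of `P` on the line of `e` in that direction becomes redundant when `e` is added. -/
lemma exists_good_entry {T ι : Type} [DecidableEq T] (a b c : T → ι) (E P : Finset T)
    (hab : ∀ x y, ∃ e ∈ E, a e = x ∧ b e = y) (hac : ∀ x y, ∃ e ∈ E, a e = x ∧ c e = y)
    (hbc : ∀ e ∈ E, ∀ f ∈ E, b e = b f → c e = c f → e = f)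
    (hPE : P ⊆ E) (hP : ∀ e ∈ P, ¬ Redund a b c e P) (r : ι) (hr : ∀ e ∈ P, a e ≠ r) :
    ∃ e ∈ E, a e = r ∧ ((∀ f ∈ P, b f = b e → ¬ Redund a b c f (insert e P)) ∨
      (∀ f ∈ P, c f = c e → ¬ Redund a b c f (insert e P))) := by
  by_contra! hcon
  obtain ⟨e, heE, her, -⟩ := hab r r
  obtain ⟨⟨f, hfP, hfb, hfR⟩, -⟩ := hcon e heE her
  obtain ⟨-, -, h, hh, hhf, hhc⟩ := hfR
  -- `f` shares its third coordinate with another element `h` of `P`, as `e` and `f` already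
  -- agree in the second coordinate.
  have hhP : h ∈ P := by
    rcases Finset.mem_insert.1 hh with rfl | hh
    · exact absurd (hbc _ heE _ (hPE hfP) hfb.symm hhc).symm hhf.symm
    · exact hh
  obtain ⟨d, hdE, hdr, hdc⟩ := hac r (c f)
  obtain ⟨-, g, hgP, hgc, ⟨x, hx, hxg, hxa⟩, ⟨y, hy, hyg, hyb⟩, -⟩ := hcon d hdE hdr
  -- `g` lies on the same line as `f` and `h`, and is therefore already redundant in `P`.
  refine hP g hgP ⟨⟨x, ?_, hxg, hxa⟩, ⟨y, ?_, hyg, hyb⟩, ?_⟩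
  · rcases Finset.mem_insert.1 hx with rfl | hx
    · exact absurd (hxa.symm.trans hdr) (hr g hgP)
    · exact hx
  · rcases Finset.mem_insert.1 hy with rfl | hy
    · exact absurd (hbc _ hdE _ (hPE hgP) hyb hgc.symm) hyg
    · exact hy
  · by_cases hfg : f = g
    · exact ⟨h, hhP, hfg ▸ hhf, by rw [hhc, hfg]⟩
    · exact ⟨f, hfP, hfg, by rw [hgc, hdc]⟩

/-- Adding to `P` an element `e` on a missed line, such that no element of `P` sharing the second
coordinate of `e` becomes redundant, requires the deletion of at most one element. -/
lemma exchange {T ι : Type} [DecidableEq T] [DecidableEq ι] (a b c : T → ι) (P : Finset T)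
    (hP : ∀ e ∈ P, ¬ Redund a b c e P) (e : T) (hr : ∀ f ∈ P, a f ≠ a e)
    (he : ∀ f ∈ P, b f = b e → ¬ Redund a b c f (insert e P)) :
    ∃ Q ⊆ insert e P, e ∈ Q ∧ (∀ f ∈ Q, ¬ Redund a b c f Q) ∧ P.card ≤ Q.card ∧
      P.image a ⊆ Q.image a ∧ P.image b ⊆ Q.image b ∧ P.image c ⊆ Q.image c := by
  have heP : e ∉ P := fun h => hr e h rfl
  -- An element that becomes redundant shares its third coordinate with `e`, and not its second.
  have key : ∀ x ∈ insert e P, Redund a b c x (insert e P) →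
      x ∈ P ∧ b x ≠ b e ∧ c x = c e := by
    intro x hx hR
    have hxP : x ∈ P := by
      rcases Finset.mem_insert.1 hx with rfl | hx
      · obtain ⟨⟨f, hf, hfx, hfa⟩, -⟩ := hR
        exact absurd hfa (hr f (Finset.mem_of_mem_insert_of_ne hf hfx))
      · exact hx
    have hb : b x ≠ b e := fun h => he x hxP h hR
    refine ⟨hxP, hb, ?_⟩
    by_contra hc
    obtain ⟨⟨u, hu, hux, hua⟩, ⟨v, hv, hvx, hvb⟩, ⟨w, hw, hwx, hwc⟩⟩ := hR
    refine hP x hxP ⟨⟨u, ?_, hux, hua⟩, ⟨v, ?_, hvx, hvb⟩, ⟨w, ?_, hwx, hwc⟩⟩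
    · exact Finset.mem_of_mem_insert_of_ne hu (fun h => hr x hxP (by rw [← hua, h]))
    · exact Finset.mem_of_mem_insert_of_ne hv (fun h => hb (by rw [← hvb, h]))
    · exact Finset.mem_of_mem_insert_of_ne hw (fun h => hc (by rw [← hwc, h]))
  by_cases hall : ∀ f ∈ insert e P, ¬ Redund a b c f (insert e P)
  · have hs := Finset.subset_insert e P
    exact ⟨insert e P, subset_rfl, Finset.mem_insert_self _ _, hall, Finset.card_le_card hs,
      Finset.image_subset_image hs, Finset.image_subset_image hs, Finset.image_subset_image hs⟩
  push Not at hall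
  obtain ⟨g, hg, hgR⟩ := hall
  obtain ⟨hgP, -, hgc⟩ := key g hg hgR
  have himg : ∀ φ : T → ι, (∃ f ∈ insert e P, f ≠ g ∧ φ f = φ g) →
      P.image φ ⊆ ((insert e P).erase g).image φ := by
    rintro φ ⟨f, hf, hfg, hφ⟩ y hy
    obtain ⟨x, hx, rfl⟩ := Finset.mem_image.1 hy
    by_cases hxg : x = g
    · exact Finset.mem_image.2 ⟨f, Finset.mem_erase.2 ⟨hfg, hf⟩, by rw [hφ, hxg]⟩
    · exact Finset.mem_image_of_mem _
        (Finset.mem_erase.2 ⟨hxg, Finset.mem_insert_of_mem hx⟩)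
  refine ⟨(insert e P).erase g, Finset.erase_subset _ _,
    Finset.mem_erase.2 ⟨fun h => heP (h ▸ hgP), Finset.mem_insert_self _ _⟩, ?_, ?_,
    himg a hgR.1, himg b hgR.2.1, himg c hgR.2.2⟩
  · rintro x hx ⟨⟨u, hu, hux, hua⟩, ⟨v, hv, hvx, hvb⟩, ⟨w, hw, hwx, hwc⟩⟩
    rw [Finset.mem_erase] at hx hu hv hw
    obtain ⟨hxP, hxb, hxc⟩ := key x hx.2
      ⟨⟨u, hu.2, hux, hua⟩, ⟨v, hv.2, hvx, hvb⟩, ⟨w, hw.2, hwx, hwc⟩⟩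
    -- With `g` as third witness, `x` would already be redundant in `P`.
    refine hP x hxP ⟨⟨u, ?_, hux, hua⟩, ⟨v, ?_, hvx, hvb⟩, ⟨g, hgP, hx.1.symm, hgc.trans hxc.symm⟩⟩
    · exact Finset.mem_of_mem_insert_of_ne hu.2 (fun h => hr x hxP (by rw [← hua, h]))
    · exact Finset.mem_of_mem_insert_of_ne hv.2 (fun h => hxb (by rw [← hvb, h]))
  · rw [Finset.card_erase_of_mem hg, Finset.card_insert_of_notMem heP]
    simp

/-- A partial minimal cover missing a line in the first direction can be replaced by one that is
at least as large and represents more lines. -/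
lemma improve {T ι : Type} [DecidableEq T] [DecidableEq ι] (a b c : T → ι) (E P : Finset T)
    (hab : ∀ x y, ∃ e ∈ E, a e = x ∧ b e = y) (hac : ∀ x y, ∃ e ∈ E, a e = x ∧ c e = y)
    (hbc : ∀ e ∈ E, ∀ f ∈ E, b e = b f → c e = c f → e = f)
    (hPE : P ⊆ E) (hP : ∀ e ∈ P, ¬ Redund a b c e P) (r : ι) (hr : ∀ e ∈ P, a e ≠ r) :
    ∃ Q ⊆ E, (∀ f ∈ Q, ¬ Redund a b c f Q) ∧ P.card ≤ Q.card ∧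
      lineCount a b c P < lineCount a b c Q := by
  -- Redundancy does not depend on the order of the last two coordinates.
  have hswap : ∀ x Q, Redund a c b x Q ↔ Redund a b c x Q := fun _ _ =>
    and_congr_right' and_comm
  obtain ⟨e, heE, rfl, he⟩ := exists_good_entry a b c E P hab hac hbc hPE hP r hr
  have hQ : ∃ Q ⊆ insert e P, e ∈ Q ∧ (∀ f ∈ Q, ¬ Redund a b c f Q) ∧ P.card ≤ Q.card ∧
      P.image a ⊆ Q.image a ∧ P.image b ⊆ Q.image b ∧ P.image c ⊆ Q.image c := by
    rcases he with he | he
    · exact exchange a b c P hP e hr he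
    · obtain ⟨Q, h1, h2, h3, h4, h5, h6, h7⟩ := exchange a c b P
        (fun x hx => by rw [hswap]; exact hP x hx) e hr
        (fun f hf hc => by rw [hswap]; exact he f hf hc)
      exact ⟨Q, h1, h2, fun f hf => by rw [← hswap]; exact h3 f hf, h4, h5, h7, h6⟩
  obtain ⟨Q, h1, h2, h3, h4, h5, h6, h7⟩ := hQ
  refine ⟨Q, h1.trans (Finset.insert_subset heE hPE), h3, h4, ?_⟩
  have hlt : (P.image a).card < (Q.image a).card := by
    refine Finset.card_lt_card ((Finset.ssubset_iff_of_subset h5).2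
      ⟨a e, Finset.mem_image_of_mem _ h2, fun h => ?_⟩)
    obtain ⟨f, hf, hfe⟩ := Finset.mem_image.1 h
    exact hr f hf hfe
  have := Finset.card_le_card h6
  have := Finset.card_le_card h7
  unfold lineCount
  omega

/-- If `P` is a partial minimal cover of a Latin square `L`, then `L` contains a
minimal cover of size at least `|P|`. -/
theorem stmt17 {n : ℕ} (L : Fin n → Fin n → Fin n) (hL : IsLatin L)
    (P : Finset (Fin n × Fin n × Fin n)) (hP : IsPartialMinimalCover L P) :
    ∃ C : Finset (Fin n × Fin n × Fin n),
      IsMinimalLSCover L C ∧ P.card ≤ C.card := by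
  classical
  let a : Fin n × Fin n × Fin n → Fin n := fun e => e.1
  let b : Fin n × Fin n × Fin n → Fin n := fun e => e.2.1
  let c : Fin n × Fin n × Fin n → Fin n := fun e => e.2.2
  have hmem : ∀ e, e ∈ lsEntries L ↔ L e.1 e.2.1 = e.2.2 := by
    rintro ⟨i, j, s⟩
    simp only [lsEntries, Finset.mem_image, Finset.mem_univ, true_and, Prod.mk.injEq, Prod.exists]
    constructor
    · rintro ⟨_, _, rfl, rfl, h⟩
      exact h
    · exact fun h => ⟨i, j, rfl, rfl, h⟩
  have hab : ∀ x y, ∃ e ∈ lsEntries L, a e = x ∧ b e = y := fun x y =>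
    ⟨(x, y, L x y), (hmem _).2 rfl, rfl, rfl⟩
  have hac : ∀ x y, ∃ e ∈ lsEntries L, a e = x ∧ c e = y := fun x y => by
    obtain ⟨j, hj⟩ := (hL.1 x).2 y
    exact ⟨(x, j, y), (hmem _).2 hj, rfl, rfl⟩
  have hbc : ∀ x y, ∃ e ∈ lsEntries L, b e = x ∧ c e = y := fun x y => by
    obtain ⟨i, hi⟩ := (hL.2 x).2 y
    exact ⟨(i, x, y), (hmem _).2 hi, rfl, rfl⟩
  have uab : ∀ e ∈ lsEntries L, ∀ f ∈ lsEntries L, a e = a f → b e = b f → e = f := by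
    rintro ⟨i, j, s⟩ he ⟨i', j', s'⟩ hf (rfl : i = i') (rfl : j = j')
    have he : L i j = s := (hmem _).1 he
    have hf : L i j = s' := (hmem _).1 hf
    rw [← he, ← hf]
  have uac : ∀ e ∈ lsEntries L, ∀ f ∈ lsEntries L, a e = a f → c e = c f → e = f := by
    rintro ⟨i, j, s⟩ he ⟨i', j', s'⟩ hf (rfl : i = i') (rfl : s = s')
    have he : L i j = s := (hmem _).1 he
    have hf : L i j' = s := (hmem _).1 hf
    rw [(hL.1 i).1 (he.trans hf.symm)]
  have ubc : ∀ e ∈ lsEntries L, ∀ f ∈ lsEntries L, b e = b f → c e = c f → e = f := by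
    rintro ⟨i, j, s⟩ he ⟨i', j', s'⟩ hf (rfl : j = j') (rfl : s = s')
    have he : L i j = s := (hmem _).1 he
    have hf : L i' j = s := (hmem _).1 hf
    rw [(hL.2 j).1 (he.trans hf.symm)]
  -- A partial minimal cover of size at least `|P|` representing the maximum number of lines.
  obtain ⟨C, hC, hmax⟩ := Finset.exists_max_image
    ((Finset.univ : Finset (Finset (Fin n × Fin n × Fin n))).filter
      fun Q => IsPartialMinimalCover L Q ∧ P.card ≤ Q.card)
    (lineCount a b c) ⟨P, by simp [hP]⟩
  simp only [Finset.mem_filter, Finset.mem_univ, true_and] at hC hmax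
  obtain ⟨⟨hCE, hCR⟩, hcard⟩ := hC
  have hbad : ∀ Q ⊆ lsEntries L, (∀ f ∈ Q, ¬ Redund a b c f Q) → C.card ≤ Q.card →
      ¬ lineCount a b c C < lineCount a b c Q := fun Q h1 h2 h3 =>
    not_lt.2 (hmax Q ⟨⟨h1, h2⟩, hcard.trans h3⟩)
  have hb : ∀ x Q, Redund b a c x Q ↔ Redund a b c x Q := fun _ _ =>
    and_left_comm
  have hc : ∀ x Q, Redund c a b x Q ↔ Redund a b c x Q := fun _ _ =>
    and_rotate
  have hcover : IsLSCover L C := by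
    refine ⟨hCE, fun r => ?_, fun r => ?_, fun r => ?_⟩
    · by_contra! hr
      obtain ⟨Q, h1, h2, h3, h4⟩ := improve a b c _ C hab hac ubc hCE hCR r hr
      exact hbad Q h1 h2 h3 h4
    · by_contra! hr
      obtain ⟨Q, h1, h2, h3, h4⟩ := improve b a c _ C
        (fun x y => (hab y x).imp fun _ h => ⟨h.1, h.2.2, h.2.1⟩) hbc uac hCE
        (fun x hx => by rw [hb]; exact hCR x hx) r hr
      refine hbad Q h1 (fun x hx => by rw [← hb]; exact h2 x hx) h3 ?_
      unfold lineCount at h4 ⊢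
      omega
    · by_contra! hr
      obtain ⟨Q, h1, h2, h3, h4⟩ := improve c a b _ C
        (fun x y => (hac y x).imp fun _ h => ⟨h.1, h.2.2, h.2.1⟩)
        (fun x y => (hbc y x).imp fun _ h => ⟨h.1, h.2.2, h.2.1⟩) uab hCE
        (fun x hx => by rw [hc]; exact hCR x hx) r hr
      refine hbad Q h1 (fun x hx => by rw [← hc]; exact h2 x hx) h3 ?_
      unfold lineCount at h4 ⊢
      omega
  refine ⟨C, ⟨hcover, fun e he h => hCR e he ?_⟩, hcard⟩
  -- If `C.erase e` represents the three lines through `e`, then `e` is redundant in `C`.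
  obtain ⟨-, h1, h2, h3⟩ := h
  have lift_mem : ∀ {p : Fin n × Fin n × Fin n → Prop}, (∃ f ∈ C.erase e, p f) →
      ∃ f ∈ C, f ≠ e ∧ p f := fun ⟨f, hf, hp⟩ =>
    ⟨f, Finset.mem_of_mem_erase hf, Finset.ne_of_mem_erase hf, hp⟩
  exact ⟨lift_mem (h1 _), lift_mem (h2 _), lift_mem (h3 _)⟩
end

section
/- For all integers n ≥ 5 and k ≥ 1 with n ≥ 2k, there exists a Latin square L of order n (with rows, columns and symbols indexed by {0,…,n−1}) such that L_{ii} = i for all i ∈ {0,…,n−k−1} and the k×k submatrix formed by the rows and columns indexed by {n−k,…,n−1} is a Latin subsquare on the symbol set {0,…,k−1}. Consequently, L has a maximal partial transversal of size n − k. -/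
open Finset

/-- An idempotent Latin square `I` on `X` together with, for every row `i` outside `O`, distinct
off-diagonal columns `μ i c` (`c : Γ`), such that for each colour `c` the cells `(i, μ i c)` with
`i ∉ O` form a partial transversal of `I`. -/
structure MarkedSquare {X Γ : Type} (O : Finset X) (I : X → X → X) (μ : X → Γ → X) : Prop where
  row : ∀ i j j', I i j = I i j' → j = j'
  col : ∀ j i i', I i j = I i' j → i = i'
  idem : ∀ i, I i i = i
  inj : ∀ i ∉ O, ∀ c c', μ i c = μ i c' → c = c'
  off : ∀ i ∉ O, ∀ c, μ i c ≠ i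
  mcol : ∀ i ∉ O, ∀ i' ∉ O, ∀ c, μ i c = μ i' c → i = i'
  msym : ∀ i ∉ O, ∀ i' ∉ O, ∀ c, I i (μ i c) = I i' (μ i' c) → i = i'

/-- Some marked square of order `m` has `k` colours and `k` exceptional rows. -/
def HasMarkedSquare (m k : ℕ) : Prop :=
  ∃ (X Γ : Type) (_ : Fintype X) (_ : Fintype Γ) (O : Finset X) (I : X → X → X) (μ : X → Γ → X),
    Fintype.card X = m ∧ Fintype.card Γ = k ∧ O.card = k ∧ MarkedSquare O I μ

/-! ### Marked squares -/

/-- With at most one non-exceptional row the transversal conditions are vacuous, so any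
idempotent Latin square will do. -/
lemma hasMarkedSquare_of_idem {X : Type} [Fintype X] [DecidableEq X] (x₀ : X) (I : X → X → X)
    (row : ∀ i j j', I i j = I i j' → j = j') (col : ∀ j i i', I i j = I i' j → i = i')
    (idem : ∀ i, I i i = i) {k : ℕ} (hk : k ≤ Fintype.card X) (hk' : Fintype.card X ≤ k + 1) :
    HasMarkedSquare (Fintype.card X) k := by
  obtain h | h : k = Fintype.card X ∨ k + 1 = Fintype.card X := by omega
  · refine ⟨X, X, inferInstance, inferInstance, univ, I, fun _ c => c, rfl, h.symm, ?_, row, col,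
      idem, ?_, ?_, ?_, ?_⟩ <;> simp [h]
  · refine ⟨X, {x : X // x ≠ x₀}, inferInstance, inferInstance, univ.erase x₀, I, fun _ c => c.1,
      rfl, ?_, ?_, row, col, idem, ?_, ?_, ?_, ?_⟩
    · rw [Fintype.card_subtype_compl, Fintype.card_subtype_eq]; omega
    · rw [card_erase_of_mem (mem_univ _), card_univ]; omega
    · intro i _ c c' h; exact Subtype.ext h
    · intro i hi c
      have : i = x₀ := by simpa using hi
      rw [this]; exact c.2
    all_goals
      intro i hi i' hi' _ _
      have h1 : i = x₀ := by simpa using hi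
      have h2 : i' = x₀ := by simpa using hi'
      rw [h1, h2]

lemma exists_half {q : ℕ} (hq : Odd q) : ∃ h : ZMod q, h + h = 1 := by
  obtain ⟨r, rfl⟩ := hq
  refine ⟨(r + 1 : ℕ), ?_⟩
  have : ((2 * r + 1 : ℕ) : ZMod (2 * r + 1)) = 0 := ZMod.natCast_self _
  push_cast at this ⊢
  linear_combination this

/-- For odd order, the diagonals `j - i = c` of `(i + j) / 2` are transversals. -/
lemma hasMarkedSquare_odd {m k : ℕ} (hm : Odd m) (hk : k ≤ m) : HasMarkedSquare m k := by
  classical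
  have : NeZero m := ⟨hm.pos.ne'⟩
  obtain ⟨h, hh⟩ := exists_half hm
  have cancel : ∀ a b : ZMod m, h * a = h * b → a = b := fun a b e => by
    linear_combination 2 * e - (a - b) * hh
  have row : ∀ i j j' : ZMod m, h * (i + j) = h * (i + j') → j = j' :=
    fun i j j' e => add_left_cancel (cancel _ _ e)
  have col : ∀ j i i' : ZMod m, h * (i + j) = h * (i' + j) → i = i' :=
    fun i j j' e => add_right_cancel (cancel _ _ e)
  have idem : ∀ i : ZMod m, h * (i + i) = i := fun i => by linear_combination i * hh
  rcases hk.eq_or_lt with rfl | hk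
  · simpa [ZMod.card] using hasMarkedSquare_of_idem (k := k) (0 : ZMod k)
      (fun i j => h * (i + j)) row col idem (by simp [ZMod.card]) (by simp [ZMod.card])
  · obtain ⟨O, -, hO⟩ := exists_subset_card_eq (s := (univ : Finset (ZMod m))) (n := k)
      (by simp [ZMod.card]; omega)
    obtain ⟨d⟩ : Nonempty (Fin k ↪ {c : ZMod m // c ≠ 0}) := by
      apply Function.Embedding.nonempty_of_card_le
      rw [Fintype.card_subtype_compl, Fintype.card_subtype_eq, ZMod.card, Fintype.card_fin]
      omega
    refine ⟨ZMod m, Fin k, inferInstance, inferInstance, O, fun i j => h * (i + j),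
      fun i c => i + (d c).1, ZMod.card m, Fintype.card_fin k, hO, row, col, idem, ?_, ?_, ?_, ?_⟩
    · intro i _ c c' e
      exact d.injective (Subtype.ext (add_left_cancel e))
    · intro i _ c e
      exact (d c).2 (by simpa using e)
    · intro i _ i' _ c e
      exact add_right_cancel e
    · intro i _ i' _ c e
      have := cancel _ _ e
      linear_combination h * this - (i - i') * hh

/-- The idempotent square of even order `q + 1`: the square `(i + j) / 2` on `ZMod q`, prolonged by
a point `none` along the transversal `j = i + 1`. Here `h` plays the role of `1 / 2`. -/
def evenSquare {q : ℕ} (h : ZMod q) : Option (ZMod q) → Option (ZMod q) → Option (ZMod q)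
  | none, none => none
  | none, some j => some (j - h)
  | some i, none => some (i + h)
  | some i, some j => if j = i + 1 then none else some (h * (i + j))

lemma hasMarkedSquare_even {q k : ℕ} (hq : Odd q) (hq3 : 3 ≤ q) (hk1 : 1 ≤ k) (hk : k ≤ q + 1) :
    HasMarkedSquare (q + 1) k := by
  classical
  have : NeZero q := ⟨by omega⟩
  have : Fact (1 < q) := ⟨by omega⟩
  obtain ⟨h, hh⟩ := exists_half hq
  have cancel : ∀ a b : ZMod q, h * a = h * b → a = b := fun a b e => by
    linear_combination 2 * e - (a - b) * hh
  have card : Fintype.card (Option (ZMod q)) = q + 1 := by simp [ZMod.card]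
  have row : ∀ i j j', evenSquare h i j = evenSquare h i j' → j = j' := by
    rintro (_ | i) (_ | j) (_ | j') e
    all_goals simp only [evenSquare] at e
    all_goals try split_ifs at e
    all_goals simp only [Option.some.injEq, reduceCtorEq] at e ⊢
    · linear_combination e
    · rename_i hne
      exact hne (by linear_combination -2 * e + (1 - i - j') * hh)
    · rename_i hne
      exact hne (by linear_combination 2 * e + (1 - i - j) * hh)
    · rename_i h1 h2; rw [h1, h2]
    · exact add_left_cancel (cancel _ _ e)
  have col : ∀ j i i', evenSquare h i j = evenSquare h i' j → i = i' := by
    rintro (_ | j) (_ | i) (_ | i') e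
    all_goals simp only [evenSquare] at e
    all_goals try split_ifs at e
    all_goals simp only [Option.some.injEq, reduceCtorEq] at e ⊢
    · linear_combination e
    · rename_i hne
      exact hne (by linear_combination 2 * e + (1 + i' + j) * hh)
    · rename_i hne
      exact hne (by linear_combination -2 * e + (1 + i + j) * hh)
    · rename_i h1 h2; linear_combination h2 - h1
    · exact add_right_cancel (cancel _ _ e)
  have idem : ∀ i, evenSquare h i i = i := by
    rintro (_ | i)
    · rfl
    · have : i ≠ i + 1 := by simp
      simp only [evenSquare, if_neg this, Option.some.injEq]
      linear_combination i * hh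
  -- the available differences: `0` is the diagonal, `1` the prolonged transversal
  have hC : Fintype.card {c : ZMod q // c ≠ 0 ∧ c ≠ 1} = q - 2 := by
    have : (univ.filter fun c : ZMod q => c ≠ 0 ∧ c ≠ 1) = univ \ {0, 1} := by
      ext; simp
    rw [Fintype.card_subtype, this, card_sdiff_of_subset (subset_univ _), card_univ, ZMod.card,
      card_pair zero_ne_one]
  have val : ∀ (i : ZMod q) (c : {c : ZMod q // c ≠ 0 ∧ c ≠ 1}),
      evenSquare h (some i) (some (i + c.1)) = some (h * (i + (i + c.1))) := fun i c => by
    have : i + c.1 ≠ i + 1 := fun e => c.2.2 (add_left_cancel e)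
    simp only [evenSquare, if_neg this]
  have vinj : ∀ i i' c : ZMod q, h * (i + (i + c)) = h * (i' + (i' + c)) → i = i' :=
    fun i i' c e => by linear_combination e - (i - i') * hh
  rcases le_or_gt q k with hqk | hqk
  · simpa [card] using hasMarkedSquare_of_idem (k := k) none (evenSquare h) row col idem
      (by omega) (by omega)
  obtain hk2 | hk2 : k ≤ q - 2 ∨ k = q - 1 := by omega
  · obtain ⟨O, hO1, -, hO⟩ := exists_subsuperset_card_eq (n := k)
      (subset_univ ({none} : Finset (Option (ZMod q)))) (by simpa using hk1)
      (by rw [card_univ, card]; omega)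
    have hnone : none ∈ O := hO1 (by simp)
    obtain ⟨d⟩ : Nonempty (Fin k ↪ {c : ZMod q // c ≠ 0 ∧ c ≠ 1}) := by
      apply Function.Embedding.nonempty_of_card_le
      rw [hC, Fintype.card_fin]; exact hk2
    refine ⟨Option (ZMod q), Fin k, inferInstance, inferInstance, O, evenSquare h,
      fun i c => i.map (· + (d c).1), card, Fintype.card_fin k, hO, row, col, idem, ?_, ?_, ?_, ?_⟩
    · rintro (_ | i) hi c c' e
      · exact absurd hnone hi
      · simp only [Option.map_some, Option.some.injEq] at e
        exact d.injective (Subtype.ext (add_left_cancel e))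
    · rintro (_ | i) hi c e
      · exact absurd hnone hi
      · simp only [Option.map_some, Option.some.injEq] at e
        exact (d c).2.1 (by simpa using e)
    · rintro (_ | i) hi (_ | i') hi' c e
      · rfl
      · exact absurd hnone hi
      · exact absurd hnone hi'
      simp only [Option.map_some, Option.some.injEq] at e
      rw [add_right_cancel e]
    · rintro (_ | i) hi (_ | i') hi' c e
      · rfl
      · exact absurd hnone hi
      · exact absurd hnone hi'
      simp only [Option.map_some, val, Option.some.injEq] at e
      rw [vinj _ _ _ e]
  · -- Two rows `0, 1` and one colour more than there are differences: the extra colour marks the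
    -- cell with symbol `none` in row `0` and the cell in column `none` in row `1`.
    have h01 : (some 0 : Option (ZMod q)) ≠ some 1 := by simp
    have hmem : ∀ i : Option (ZMod q), i ∉ univ \ ({some 0, some 1} : Finset (Option (ZMod q))) →
        i = some 0 ∨ i = some 1 := by
      intro i hi; simpa [or_iff_not_imp_left] using hi
    refine ⟨Option (ZMod q), Option {c : ZMod q // c ≠ 0 ∧ c ≠ 1}, inferInstance, inferInstance,
      univ \ {some 0, some 1}, evenSquare h,
      fun i c => c.elim (if i = some 0 then some 1 else none) fun c => i.map (· + c.1), card, ?_, ?_,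
      row, col, idem, ?_, ?_, ?_, ?_⟩
    · rw [Fintype.card_option, hC]; omega
    · rw [card_sdiff_of_subset (subset_univ _), card_univ, card, card_pair h01]; omega
    · intro i hi
      rcases hmem i hi with rfl | rfl <;> rintro (_ | c) (_ | c') e <;>
        simp [Subtype.ext_iff] at e ⊢
      · exact absurd e.symm c'.2.2
      · exact absurd e c.2.2
      · exact e
      · exact e
    · intro i hi
      rcases hmem i hi with rfl | rfl <;> rintro (_ | c) e <;> simp at e
      · exact c.2.1 e
      · exact c.2.1 e
    · intro i hi i' hi'
      rcases hmem i hi with rfl | rfl <;> rcases hmem i' hi' with rfl | rfl <;>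
        rintro (_ | c) e <;> simp at e ⊢
    · intro i hi i' hi'
      rcases hmem i hi with rfl | rfl <;> rcases hmem i' hi' with rfl | rfl <;>
        rintro (_ | c) e <;> try rfl
      · simp [evenSquare] at e
      · simp only [Option.elim_some, Option.map_some, val, Option.some.injEq] at e
        rw [vinj _ _ _ e]
      · simp [evenSquare] at e
      · simp only [Option.elim_some, Option.map_some, val, Option.some.injEq] at e
        rw [vinj _ _ _ e]

lemma hasMarkedSquare {m k : ℕ} (hm : 3 ≤ m) (hk1 : 1 ≤ k) (hk : k ≤ m) : HasMarkedSquare m k := by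
  rcases Nat.even_or_odd m with he | ho
  · obtain ⟨q, rfl⟩ : ∃ q, m = q + 1 := ⟨m - 1, by omega⟩
    have hq : Odd q := by
      by_contra h
      rw [Nat.not_odd_iff_even] at h
      exact (Nat.not_even_iff_odd.2 h.add_one) he
    have : q ≠ 2 := by rintro rfl; revert hq; decide
    exact hasMarkedSquare_even hq (by omega) hk1 hk
  · exact hasMarkedSquare_odd ho hk

/-! ### Completing Latin rectangles -/

/-- Hall's theorem applied to a Latin rectangle with rows `R a`, `a ∈ A`: a further row exists. -/
lemma exists_new_row {N : Type} [Fintype N] [DecidableEq N] (A : Finset N) (R : N → N → N)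
    (hrow : ∀ a ∈ A, Function.Injective (R a))
    (hcol : ∀ a ∈ A, ∀ b ∈ A, ∀ x, R a x = R b x → a = b) (hA : A.card < Fintype.card N) :
    ∃ p : N → N, Function.Injective p ∧ ∀ a ∈ A, ∀ x, R a x ≠ p x := by
  set t : N → Finset N := fun x => univ \ A.image fun a => R a x with ht
  have hd : 0 < Fintype.card N - A.card := by omega
  have hcard : ∀ x, (t x).card = Fintype.card N - A.card := fun x => by
    rw [ht, card_sdiff_of_subset (subset_univ _), card_univ, card_image_of_injOn]
    exact fun a ha b hb e => hcol a ha b hb x e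
  -- each symbol `y` is missing from exactly `|N| - |A|` columns
  have hcard' : ∀ y, (univ.filter fun x => y ∈ t x).card = Fintype.card N - A.card := fun y => by
    have hbij : ∀ a ∈ A, ∃ x, R a x = y := fun a ha =>
      (Finite.injective_iff_surjective.1 (hrow a ha)) y
    choose! g hg using hbij
    have : (univ.filter fun x => y ∈ t x) = univ \ A.image g := by
      ext x
      simp only [ht, mem_filter, mem_univ, true_and, mem_sdiff, mem_image, not_exists, not_and]
      refine forall₂_congr fun a ha => not_congr ?_
      refine ⟨fun e => hrow a ha (by rw [hg a ha, e]), fun e => by rw [← e, hg a ha]⟩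
    rw [this, card_sdiff_of_subset (subset_univ _), card_univ, card_image_of_injOn]
    intro a ha b hb e
    refine hcol a ha b hb (g a) ?_
    rw [hg a ha, e, hg b hb]
  obtain ⟨p, hp, hpt⟩ := (all_card_le_biUnion_card_iff_exists_injective t).1 fun s => by
    have := card_mul_le_card_mul (s := s) (t := s.biUnion t) (fun x y => y ∈ t x)
      (m := Fintype.card N - A.card) (n := Fintype.card N - A.card)
      (fun x hx => by
        rw [← hcard x]
        exact card_le_card fun y hy => by
          simp only [mem_bipartiteAbove, mem_biUnion]
          exact ⟨⟨x, hx, hy⟩, hy⟩)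
      (fun y _ => by
        rw [← hcard' y]
        exact card_le_card fun x hx => by
          simp only [mem_bipartiteBelow] at hx
          simpa using hx.2)
    exact Nat.le_of_mul_le_mul_right this hd
  refine ⟨p, hp, fun a ha x e => ?_⟩
  have := hpt x
  simp only [ht, mem_sdiff, mem_image, not_exists, not_and, mem_univ, true_and] at this
  exact this a ha e

lemma exists_completion {N : Type} [Fintype N] [DecidableEq N] (A : Finset N) (R : N → N → N)
    (hrow : ∀ a ∈ A, Function.Injective (R a))
    (hcol : ∀ a ∈ A, ∀ b ∈ A, ∀ x, R a x = R b x → a = b) :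
    ∃ S : N → N → N, (∀ a ∈ A, S a = R a) ∧ (∀ a, Function.Injective (S a)) ∧
      ∀ a b x, S a x = S b x → a = b := by
  suffices H : ∀ B : Finset N, ∃ S : N → N → N, (∀ a ∈ A, S a = R a) ∧
      (∀ a ∈ A ∪ B, Function.Injective (S a)) ∧
      ∀ a ∈ A ∪ B, ∀ b ∈ A ∪ B, ∀ x, S a x = S b x → a = b by
    obtain ⟨S, h1, h2, h3⟩ := H univ
    exact ⟨S, h1, fun a => h2 a (by simp), fun a b => h3 a (by simp) b (by simp)⟩
  intro B
  induction B using Finset.induction_on with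
  | empty => exact ⟨R, fun _ _ => rfl, by simpa using hrow, by simpa using hcol⟩
  | insert b B _ ih =>
    obtain ⟨S, h1, h2, h3⟩ := ih
    rw [union_insert]
    by_cases hb : b ∈ A ∪ B
    · rw [insert_eq_of_mem hb]; exact ⟨S, h1, h2, h3⟩
    obtain ⟨p, hp, hpS⟩ := exists_new_row (A ∪ B) S h2 h3 (card_lt_univ_of_notMem hb)
    have hne : ∀ a ∈ A ∪ B, a ≠ b := fun a ha e => hb (e ▸ ha)
    refine ⟨Function.update S b p, fun a ha => ?_, fun a ha => ?_, fun a ha a' ha' x e => ?_⟩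
    · rw [Function.update_of_ne (hne a (mem_union_left _ ha)), h1 a ha]
    · rcases mem_insert.1 ha with rfl | ha
      · simpa using hp
      · rw [Function.update_of_ne (hne a ha)]; exact h2 a ha
    · rcases mem_insert.1 ha with rfl | ha <;> rcases mem_insert.1 ha' with h | ha'
      · exact h.symm
      · rw [Function.update_self, Function.update_of_ne (hne a' ha')] at e
        exact absurd e.symm (hpS a' ha' x)
      · rw [h, Function.update_self, Function.update_of_ne (hne a ha)] at e
        exact absurd e (hpS a ha x)
      · rw [Function.update_of_ne (hne a ha), Function.update_of_ne (hne a' ha')] at e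
        exact h3 a ha a' ha' x e

/-! ### Prolongation of a marked square -/

open Classical in
/-- The prolongation of a marked square to a Latin rectangle with columns and symbols `X ⊕ Γ`. An
exceptional row keeps its entries and is continued by a row of the square `Q` on `Γ`; in any other
row the cell `(s, μ s c)` receives the new symbol `c` and its old symbol moves to the new
column `c`. -/
noncomputable def prolong {X Γ : Type} (O : Finset X) (I : X → X → X) (μ : X → Γ → X)
    (Q : X → Γ → Γ) (s : X) : X ⊕ Γ → X ⊕ Γ
  | .inl j => if s ∈ O then .inl (I s j)
      else if h : ∃ c, μ s c = j then .inr h.choose else .inl (I s j)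
  | .inr c => if s ∈ O then .inr (Q s c) else .inl (I s (μ s c))

section Prolong

variable {X Γ : Type} {O : Finset X} {I : X → X → X} {μ : X → Γ → X}
  {Q : X → Γ → Γ} {s : X}

lemma prolong_inl_of_mem (hs : s ∈ O) (j : X) : prolong O I μ Q s (.inl j) = .inl (I s j) := by
  simp [prolong, hs]

lemma prolong_inr_of_mem (hs : s ∈ O) (c : Γ) : prolong O I μ Q s (.inr c) = .inr (Q s c) := by
  simp [prolong, hs]

lemma prolong_inr (hs : s ∉ O) (c : Γ) : prolong O I μ Q s (.inr c) = .inl (I s (μ s c)) := by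
  simp [prolong, hs]

lemma prolong_inl_unmarked (hs : s ∉ O) {j : X} (h : ¬ ∃ c, μ s c = j) :
    prolong O I μ Q s (.inl j) = .inl (I s j) := by
  simp only [prolong, if_neg hs, dif_neg h]

lemma prolong_inl_marked (H : MarkedSquare O I μ) (hs : s ∉ O) (c : Γ) :
    prolong O I μ Q s (.inl (μ s c)) = .inr c := by
  have h : ∃ c', μ s c' = μ s c := ⟨c, rfl⟩
  simp only [prolong, if_neg hs, dif_pos h]
  exact congrArg _ (H.inj s hs _ _ h.choose_spec)

lemma prolong_row (H : MarkedSquare O I μ) (hQ : ∀ s ∈ O, ∀ c c', Q s c = Q s c' → c = c') :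
    Function.Injective (prolong O I μ Q s) := by
  by_cases hs : s ∈ O
  · rintro (j | c) (j' | c') e <;>
      simp only [prolong_inl_of_mem hs, prolong_inr_of_mem hs, Sum.inl.injEq, Sum.inr.injEq,
        reduceCtorEq] at e ⊢
    · exact H.row _ _ _ e
    · exact hQ s hs _ _ e
  · have key : ∀ j c, prolong O I μ Q s (.inl j) ≠ prolong O I μ Q s (.inr c) := by
      intro j c e
      by_cases hj : ∃ c, μ s c = j
      · obtain ⟨c', rfl⟩ := hj
        rw [prolong_inl_marked H hs, prolong_inr hs] at e
        cases e
      · rw [prolong_inl_unmarked hs hj, prolong_inr hs] at e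
        exact hj ⟨c, (H.row _ _ _ (Sum.inl.inj e)).symm⟩
    rintro (j | c) (j' | c') e
    · by_cases hj : ∃ c, μ s c = j <;> by_cases hj' : ∃ c, μ s c = j'
      · obtain ⟨c, rfl⟩ := hj
        obtain ⟨c', rfl⟩ := hj'
        rw [prolong_inl_marked H hs, prolong_inl_marked H hs] at e
        rw [Sum.inr.inj e]
      · obtain ⟨c, rfl⟩ := hj
        rw [prolong_inl_marked H hs, prolong_inl_unmarked hs hj'] at e
        cases e
      · obtain ⟨c, rfl⟩ := hj'
        rw [prolong_inl_marked H hs, prolong_inl_unmarked hs hj] at e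
        cases e
      · rw [prolong_inl_unmarked hs hj', prolong_inl_unmarked hs hj] at e
        rw [H.row _ _ _ (Sum.inl.inj e)]
    · exact absurd e (key _ _)
    · exact absurd e.symm (key _ _)
    · rw [prolong_inr hs, prolong_inr hs] at e
      rw [H.inj s hs _ _ (H.row _ _ _ (Sum.inl.inj e))]

/-- An entry of the old columns is either the old one or a marked cell's colour. -/
lemma prolong_inl_cases (H : MarkedSquare O I μ) (s j : X) : prolong O I μ Q s (.inl j) = .inl (I s j) ∨
    s ∉ O ∧ ∃ c, μ s c = j ∧ prolong O I μ Q s (.inl j) = .inr c := by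
  by_cases hs : s ∈ O
  · exact .inl (prolong_inl_of_mem hs j)
  · by_cases hj : ∃ c, μ s c = j
    · obtain ⟨c, rfl⟩ := hj
      exact .inr ⟨hs, c, rfl, prolong_inl_marked H hs c⟩
    · exact .inl (prolong_inl_unmarked hs hj)

lemma prolong_col (H : MarkedSquare O I μ) (hQ : ∀ s ∈ O, ∀ s' ∈ O, ∀ c, Q s c = Q s' c → s = s') (s s' : X) (x : X ⊕ Γ)
    (e : prolong O I μ Q s x = prolong O I μ Q s' x) : s = s' := by
  rcases x with j | c
  · rcases prolong_inl_cases H (Q := Q) s j with h | ⟨hs, c, hc, h⟩ <;>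
      rcases prolong_inl_cases H (Q := Q) s' j with h' | ⟨hs', c', hc', h'⟩ <;> rw [h, h'] at e
    · exact H.col _ _ _ (Sum.inl.inj e)
    · cases e
    · cases e
    · obtain rfl := Sum.inr.inj e
      exact H.mcol s hs s' hs' c (hc.trans hc'.symm)
  · by_cases hs : s ∈ O <;> by_cases hs' : s' ∈ O
    · rw [prolong_inr_of_mem hs, prolong_inr_of_mem hs'] at e
      exact hQ s hs s' hs' c (Sum.inr.inj e)
    · rw [prolong_inr_of_mem hs, prolong_inr hs'] at e; cases e
    · rw [prolong_inr hs, prolong_inr_of_mem hs'] at e; cases e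
    · rw [prolong_inr hs, prolong_inr hs'] at e
      exact H.msym s hs s' hs' c (Sum.inl.inj e)

lemma prolong_diag (H : MarkedSquare O I μ) (s : X) : prolong O I μ Q s (.inl s) = .inl s := by
  rcases prolong_inl_cases H (Q := Q) s s with h | ⟨hs, c, hc, -⟩
  · rw [h, H.idem]
  · exact absurd hc (H.off s hs c)

end Prolong

/-- A marked square yields the required Latin square on `X ⊕ Γ`: complete the prolongation and
interchange the roles of rows and symbols. -/
lemma MarkedSquare.exists_latin {X Γ : Type} [Fintype X] [Fintype Γ] {O : Finset X}
    {I : X → X → X} {μ : X → Γ → X} (H : MarkedSquare O I μ) (hO : O.card = Fintype.card Γ) :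
    ∃ L : X ⊕ Γ → X ⊕ Γ → X ⊕ Γ, IsLatin L ∧ (∀ x, L (.inl x) (.inl x) = .inl x) ∧
      ∀ c c', ∃ o ∈ O, L (.inr c) (.inr c') = .inl o := by
  classical
  -- `Q` is the addition table of a cyclic group, read through bijections `O ≃ ZMod k ≃ Γ`
  obtain ⟨Q, hQ1, hQ2⟩ : ∃ Q : X → Γ → Γ, (∀ s ∈ O, ∀ c c', Q s c = Q s c' → c = c') ∧
      ∀ s ∈ O, ∀ s' ∈ O, ∀ c, Q s c = Q s' c → s = s' := by
    rcases isEmpty_or_nonempty Γ with hΓ | hΓ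
    · exact ⟨fun _ c => c, by simp, fun _ _ _ _ c => hΓ.elim c⟩
    have : NeZero (Fintype.card Γ) := ⟨Fintype.card_ne_zero⟩
    let e : Γ ≃ ZMod (Fintype.card Γ) := Fintype.equivOfCardEq (by simp [ZMod.card])
    let f : O ≃ ZMod (Fintype.card Γ) := Fintype.equivOfCardEq (by simp [ZMod.card, hO])
    refine ⟨fun s c => if hs : s ∈ O then e.symm (f ⟨s, hs⟩ + e c) else c, ?_, ?_⟩
    · intro s hs c c' h
      simpa [hs] using h
    · intro s hs s' hs' c h
      simpa [hs, hs'] using h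
  obtain ⟨S, hS1, hS2, hS3⟩ := exists_completion (univ.image (Sum.inl : X → X ⊕ Γ))
    (fun s => s.elim (prolong O I μ Q) fun _ x => x)
    (by
      intro a ha
      obtain ⟨s, -, rfl⟩ := mem_image.1 ha
      exact prolong_row H hQ1)
    (by
      intro a ha b hb x e
      obtain ⟨s, -, rfl⟩ := mem_image.1 ha
      obtain ⟨s', -, rfl⟩ := mem_image.1 hb
      exact congrArg _ (prolong_col H hQ2 s s' x e))
  have hS1' : ∀ s, S (.inl s) = prolong O I μ Q s := fun s => hS1 _ (by simp)
  have hex : ∀ i j, ∃ s, S s i = j := fun i => by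
    have hinj : Function.Injective fun s => S s i := fun a b e => hS3 a b i e
    exact Finite.injective_iff_surjective.1 hinj
  choose L hL using hex
  have hL' : ∀ s i, L i (S s i) = s := fun s i => hS3 _ _ i (hL i _)
  refine ⟨L, ⟨fun i => Finite.injective_iff_bijective.1 fun j j' e => ?_,
    fun j => Finite.injective_iff_bijective.1 fun i i' e => ?_⟩, fun x => ?_, fun c c' => ?_⟩
  · rw [← hL i j, e, hL]
  · refine hS2 (L i j) ?_
    rw [hL, e, hL]
  · have := hL' (.inl x) (.inl x)
    rwa [hS1', prolong_diag H] at this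
  · -- the map `s ↦ Q s c` from `O` to `Γ` is injective, hence onto
    obtain ⟨o, ho, hoc⟩ := Finset.surj_on_of_inj_on_of_card_le (s := O) (t := (univ : Finset Γ))
      (fun s _ => Q s c) (fun _ _ => mem_univ _) (fun a b ha hb h => hQ2 a ha b hb c h)
      (by rw [hO, card_univ]) c' (mem_univ _)
    refine ⟨o, ho, ?_⟩
    have := hL' (.inl o) (.inr c)
    rwa [hS1', prolong_inr_of_mem ho, ← hoc] at this

/-! ### The square on `Fin n` -/

lemma exists_equiv_fin {X : Type} [Fintype X] (O : Finset X) :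
    ∃ e : X ≃ Fin (Fintype.card X), ∀ x ∈ O, (e x : ℕ) < O.card := by
  classical
  let e₀ := Fintype.equivFin X
  have hle : O.card ≤ Fintype.card X := card_le_univ O
  let f : {i : Fin (Fintype.card X) // i ∈ O.map e₀.toEmbedding} ≃
      {i : Fin (Fintype.card X) // (i : ℕ) < O.card} :=
    Fintype.equivOfCardEq (by
      rw [Fintype.card_coe, card_map, Fintype.card_subtype, Fin.card_filter_val_lt]
      omega)
  refine ⟨e₀.trans f.extendSubtype, fun x hx => ?_⟩
  exact f.extendSubtype_mem (e₀ x) (by simpa using hx)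

lemma exists_latin_fin {m k : ℕ} (hm : 3 ≤ m) (hk1 : 1 ≤ k) (hk : k ≤ m) :
    ∃ L : Fin (m + k) → Fin (m + k) → Fin (m + k), IsLatin L ∧
      (∀ i : Fin (m + k), (i : ℕ) < m → L i i = i) ∧
      ∀ i j : Fin (m + k), m ≤ (i : ℕ) → m ≤ (j : ℕ) → (L i j : ℕ) < k := by
  obtain ⟨X, Γ, _, _, O, I, μ, rfl, rfl, hO, H⟩ := hasMarkedSquare hm hk1 hk
  obtain ⟨L, ⟨h1, h2⟩, h3, h4⟩ := H.exists_latin hO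
  obtain ⟨e, he⟩ := exists_equiv_fin O
  let E : X ⊕ Γ ≃ Fin (Fintype.card X + Fintype.card Γ) :=
    (Equiv.sumCongr e (Fintype.equivFin Γ)).trans finSumFinEquiv
  have hl : ∀ x, (E (.inl x) : ℕ) = e x := fun x => by simp [E]
  have hr : ∀ c, (E (.inr c) : ℕ) = Fintype.card X + Fintype.equivFin Γ c := fun x => by simp [E]
  refine ⟨fun i j => E (L (E.symm i) (E.symm j)), ⟨fun i => ?_, fun j => ?_⟩, ?_, ?_⟩
  · exact E.bijective.comp ((h1 _).comp E.symm.bijective)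
  · exact E.bijective.comp ((h2 (E.symm j)).comp E.symm.bijective)
  · intro i hi
    obtain ⟨x | c, rfl⟩ := E.surjective i
    · simp [h3]
    · rw [hr] at hi; omega
  · intro i j hi hj
    obtain ⟨x | c, rfl⟩ := E.surjective i
    · rw [hl] at hi; have := (e x).2; omega
    obtain ⟨x | c', rfl⟩ := E.surjective j
    · rw [hl] at hj; have := (e x).2; omega
    obtain ⟨o, ho, h⟩ := h4 c c'
    simp only [Equiv.symm_apply_apply, h, hl]
    exact hO ▸ he o ho

/-- An injective map sending the last `k` points into the first `k` hits each of the first `k`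
exactly once from the last `k`. -/
lemma existsUnique_of_injective {m k : ℕ} (f : Fin (m + k) → Fin (m + k))
    (hf : Function.Injective f) (h : ∀ j : Fin (m + k), m ≤ (j : ℕ) → (f j : ℕ) < k)
    (s : Fin (m + k)) (hs : (s : ℕ) < k) : ∃! j : Fin (m + k), m ≤ (j : ℕ) ∧ f j = s := by
  obtain ⟨i, hi⟩ : ∃ i : Fin k, f (Fin.natAdd m i) = s := by
    have hinj : Function.Injective
        fun i : Fin k => (⟨f (Fin.natAdd m i), h _ (by simp)⟩ : Fin k) := by
      intro i i' e
      have := hf (Fin.ext (Fin.mk.inj e))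
      simpa using this
    obtain ⟨i, hi⟩ := Finite.injective_iff_surjective.1 hinj ⟨s, hs⟩
    exact ⟨i, Fin.ext (Fin.mk.inj hi)⟩
  exact ⟨Fin.natAdd m i, ⟨by simp, hi⟩, fun j hj => hf (hj.2.trans hi.symm)⟩

/-- The first `m` diagonal entries form a maximal partial transversal: an entry meeting none of
their rows and columns lies in the subsquare, whose symbols they all represent. -/
lemma exists_maximalPT {m k : ℕ} (hk : k ≤ m) (L : Fin (m + k) → Fin (m + k) → Fin (m + k))
    (hd : ∀ i : Fin (m + k), (i : ℕ) < m → L i i = i)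
    (hb : ∀ i j : Fin (m + k), m ≤ (i : ℕ) → m ≤ (j : ℕ) → (L i j : ℕ) < k) :
    ∃ T : Finset (Fin (m + k) × Fin (m + k) × Fin (m + k)), IsMaximalPT L T ∧ T.card = m := by
  set D : Finset (Fin (m + k)) := univ.filter fun i => (i : ℕ) < m with hD
  have hmem : ∀ i : Fin (m + k), (i : ℕ) < m → (i, i, i) ∈ D.image fun i => (i, i, i) :=
    fun i hi => mem_image.2 ⟨i, by simpa [hD] using hi, rfl⟩
  refine ⟨D.image fun i => (i, i, i), ⟨⟨?_, ?_⟩, ?_⟩, ?_⟩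
  · intro x hx
    obtain ⟨i, hi, rfl⟩ := mem_image.1 hx
    refine mem_image.2 ⟨(i, i), mem_univ _, ?_⟩
    simp [hd i (by simpa [hD] using hi)]
  · intro x hx y hy hne
    obtain ⟨i, -, rfl⟩ := mem_image.1 hx
    obtain ⟨j, -, rfl⟩ := mem_image.1 hy
    have : i ≠ j := fun e => hne (by rw [e])
    exact ⟨this, this, this⟩
  · intro x hx hxT hPT
    obtain ⟨⟨i, j⟩, -, rfl⟩ := mem_image.1 hx
    have key : ∀ a : Fin (m + k), (a : ℕ) < m → i ≠ a ∧ j ≠ a ∧ L i j ≠ a := fun a ha =>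
      hPT.2 _ (mem_insert_self _ _) (a, a, a) (mem_insert_of_mem (hmem a ha))
        fun e => hxT (by rw [e]; exact hmem a ha)
    have hi : m ≤ (i : ℕ) := not_lt.1 fun h => (key i h).1 rfl
    have hj : m ≤ (j : ℕ) := not_lt.1 fun h => (key j h).2.1 rfl
    exact (key (L i j) ((hb i j hi hj).trans_le hk)).2.2 rfl
  · rw [card_image_of_injective _ fun i j e => (Prod.mk.inj e).1, hD, Fin.card_filter_val_lt]
    omega

/-- For `n ≥ 5`, `k ≥ 1`, `n ≥ 2k`, there is a Latin square of order `n` which is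
idempotent on the first `n - k` diagonal cells and whose bottom-right `k × k`
submatrix is a Latin subsquare on the symbols `{0, …, k-1}`; consequently it has a
maximal partial transversal of size `n - k`. -/
theorem stmt18 {n k : ℕ} (hn : 5 ≤ n) (hk : 1 ≤ k) (hnk : 2 * k ≤ n) :
    ∃ L : Fin n → Fin n → Fin n,
      IsLatin L ∧
      (∀ i : Fin n, (i : ℕ) < n - k → L i i = i) ∧
      (∀ i j : Fin n, n - k ≤ (i : ℕ) → n - k ≤ (j : ℕ) → (L i j : ℕ) < k) ∧
      (∀ i : Fin n, n - k ≤ (i : ℕ) → ∀ s : Fin n, (s : ℕ) < k →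
        ∃! j : Fin n, n - k ≤ (j : ℕ) ∧ L i j = s) ∧
      (∀ j : Fin n, n - k ≤ (j : ℕ) → ∀ s : Fin n, (s : ℕ) < k →
        ∃! i : Fin n, n - k ≤ (i : ℕ) ∧ L i j = s) ∧
      ∃ T : Finset (Fin n × Fin n × Fin n),
        IsMaximalPT L T ∧ T.card = n - k := by
  obtain ⟨m, rfl⟩ : ∃ m, n = m + k := ⟨n - k, by omega⟩
  obtain ⟨L, hL, hd, hb⟩ := exists_latin_fin (m := m) (k := k) (by omega) hk (by omega)
  rw [Nat.add_sub_cancel]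
  refine ⟨L, hL, hd, hb, fun i hi s hs => ?_, fun j hj s hs => ?_,
    exists_maximalPT (by omega) L hd hb⟩
  · exact existsUnique_of_injective _ (hL.1 i).injective (fun j hj => hb i j hi hj) s hs
  · exact existsUnique_of_injective _ (hL.2 j).injective (fun i hi => hb i j hi hj) s hs
end

section
/- For every real ε > 0 there exists a constant C > 0 such that every Latin square of order n ≥ 1 has a minimal cover of size at least 3n − C·n^{1/2+ε}. -/
/-! ### Minimal covers from privately represented lines -/

/-- The row, column and symbol lines through an entry, as elements of the disjoint union of the
sets of rows, columns and symbols. -/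
def entryLines {n : ℕ} (e : Fin n × Fin n × Fin n) : Finset (Fin n ⊕ Fin n ⊕ Fin n) :=
  {.inl e.1, .inr (.inl e.2.1), .inr (.inr e.2.2)}

lemma card_entryLines_le {n : ℕ} (e : Fin n × Fin n × Fin n) : (entryLines e).card ≤ 3 :=
  Finset.card_le_three

lemma isLSCover_iff {n : ℕ} (L : Fin n → Fin n → Fin n) (M : Finset (Fin n × Fin n × Fin n)) :
    IsLSCover L M ↔ M ⊆ lsEntries L ∧ ∀ l, ∃ e ∈ M, l ∈ entryLines e := by
  simp only [IsLSCover, entryLines, Sum.forall, Finset.mem_insert, Finset.mem_singleton,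
    Sum.inl.injEq, Sum.inr.injEq, reduceCtorEq, false_or, or_false, eq_comm]

lemma mem_lsEntries {n : ℕ} (L : Fin n → Fin n → Fin n) (i j : Fin n) :
    (i, j, L i j) ∈ lsEntries L :=
  Finset.mem_image.2 ⟨(i, j), Finset.mem_univ _, rfl⟩

lemma exists_minimal_subcover {n : ℕ} (L : Fin n → Fin n → Fin n)
    (D : Finset (Fin n × Fin n × Fin n)) (hD : IsLSCover L D) :
    ∃ M ⊆ D, IsMinimalLSCover L M := by
  classical
  obtain ⟨M, hM, hmin⟩ := Finset.exists_min_image (D.powerset.filter (IsLSCover L)) Finset.card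
    ⟨D, by simp [hD]⟩
  simp only [Finset.mem_filter, Finset.mem_powerset] at hM hmin
  refine ⟨M, hM.1, hM.2, fun e he hcov => ?_⟩
  have h := hmin (M.erase e) ⟨(Finset.erase_subset _ _).trans hM.1, hcov⟩
  have := Finset.card_erase_lt_of_mem he
  omega

lemma exists_entry_through {n : ℕ} (L : Fin n → Fin n → Fin n) (hL : IsLatin L)
    (l : Fin n ⊕ Fin n ⊕ Fin n) : ∃ e ∈ lsEntries L, l ∈ entryLines e := by
  rcases l with i | j | s
  · exact ⟨_, mem_lsEntries L i i, by simp [entryLines]⟩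
  · exact ⟨_, mem_lsEntries L j j, by simp [entryLines]⟩
  · obtain ⟨j, hj⟩ := (hL.1 s).2 s
    exact ⟨_, mem_lsEntries L s j, by simpa [entryLines] using hj.symm⟩

/-- If every line of `G` has an entry meeting no other line of `G`, then some minimal cover has at
least `3n - 4 |Gᶜ|` entries. -/
lemma exists_large_minimal_cover {n : ℕ} (L : Fin n → Fin n → Fin n) (hL : IsLatin L)
    (G : Finset (Fin n ⊕ Fin n ⊕ Fin n))
    (hG : ∀ l ∈ G, ∃ e ∈ lsEntries L, l ∈ entryLines e ∧ ∀ l' ∈ G, l' ∈ entryLines e → l' = l) :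
    ∃ M, IsMinimalLSCover L M ∧ 3 * n ≤ M.card + 4 * Gᶜ.card := by
  classical
  have hchoice : ∀ l, ∃ e ∈ lsEntries L, l ∈ entryLines e ∧
      (l ∈ G → ∀ l' ∈ G, l' ∈ entryLines e → l' = l) := by
    intro l
    by_cases hl : l ∈ G
    · obtain ⟨e, he, h1, h2⟩ := hG l hl
      exact ⟨e, he, h1, fun _ => h2⟩
    · obtain ⟨e, he, h1⟩ := exists_entry_through L hL l
      exact ⟨e, he, h1, fun h => absurd h hl⟩
  choose f hf hinc hpriv using hchoice
  obtain ⟨M, hMsub, hM⟩ := exists_minimal_subcover L (Finset.univ.image f) <| by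
    rw [isLSCover_iff]
    refine ⟨?_, fun l => ⟨f l, Finset.mem_image_of_mem _ (Finset.mem_univ _), hinc l⟩⟩
    intro e he
    obtain ⟨l, -, rfl⟩ := Finset.mem_image.1 he
    exact hf l
  refine ⟨M, hM, ?_⟩
  -- the lines met by the additional entries
  set B := Gᶜ.biUnion fun l => entryLines (f l) with hB
  have hBcard : B.card ≤ Gᶜ.card * 3 :=
    Finset.card_biUnion_le_card_mul _ _ _ fun l _ => card_entryLines_le _
  have hGcard : 3 * n = G.card + Gᶜ.card := by
    rw [Finset.card_add_card_compl]; simp; ring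
  have hsdiff : G.card ≤ (G \ B).card + B.card := by
    have := Finset.le_card_sdiff B G
    omega
  have hle : (G \ B).card ≤ M.card := by
    refine Finset.card_le_card_of_injOn f ?_ ?_
    · intro l hl
      obtain ⟨hlG, hlB⟩ := Finset.mem_sdiff.1 (Finset.mem_coe.1 hl)
      obtain ⟨e, heM, hle⟩ := ((isLSCover_iff L M).1 hM.1).2 l
      obtain ⟨l', -, rfl⟩ := Finset.mem_image.1 (hMsub heM)
      by_cases hl' : l' ∈ G
      · rw [hpriv l' hl' l hlG hle]
        exact heM
      · exact absurd (Finset.mem_biUnion.2 ⟨l', Finset.mem_compl.2 hl', hle⟩) hlB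
    · intro l hl l' hl' heq
      have h1 := (Finset.mem_sdiff.1 (Finset.mem_coe.1 hl)).1
      have h2 := (Finset.mem_sdiff.1 (Finset.mem_coe.1 hl')).1
      exact hpriv l' h2 l h1 (heq ▸ hinc l)
  omega

/-! ### Random subsets of `Fin n` -/

/-- The weight of a Boolean under the Bernoulli distribution with success probability `p`. -/
def bernWt (p : ℝ) (t : Bool) : ℝ := if t then p else 1 - p

/-- The probability of a random subset of `Fin n` (given by its indicator function) whose elements
are selected independently with probability `p`. -/
def subsetWt {n : ℕ} (p : ℝ) (a : Fin n → Bool) : ℝ := ∏ x, bernWt p (a x)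

/-- A Boolean as the real number `0` or `1`. -/
def ind (t : Bool) : ℝ := if t then 1 else 0

/-- The size of the subset with indicator function `a`. -/
def subsetSize {n : ℕ} (a : Fin n → Bool) : ℝ := ∑ x, ind (a x)

/-- The indicator, as a real number, of the event that no `x` in the subset `b` has `π x` in the
subset `c`. -/
def missInd {n : ℕ} (b c : Fin n → Bool) (π : Fin n → Fin n) : ℝ :=
  ∏ x, (1 - ind (b x) * ind (c (π x)))

lemma subsetWt_nonneg {n : ℕ} {p : ℝ} (h0 : 0 ≤ p) (h1 : p ≤ 1) (a : Fin n → Bool) :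
    0 ≤ subsetWt p a :=
  Finset.prod_nonneg fun x _ => by unfold bernWt; split_ifs <;> linarith

lemma sum_subsetWt {n : ℕ} (p : ℝ) : ∑ a : Fin n → Bool, subsetWt p a = 1 := by
  unfold subsetWt
  rw [← Fintype.sum_pow]
  simp [bernWt]

lemma sum_subsetWt_mul_size {n : ℕ} (p : ℝ) :
    ∑ a : Fin n → Bool, subsetWt p a * subsetSize a = n * p := by
  have key : ∀ x : Fin n, ∑ a : Fin n → Bool, subsetWt p a * ind (a x) = p := by
    intro x
    have h1 : ∀ a : Fin n → Bool, subsetWt p a * ind (a x)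
        = ∏ y, bernWt p (a y) * (if y = x then ind (a y) else 1) := by
      intro a
      rw [Finset.prod_mul_distrib, subsetWt]
      simp
    have h2 := Finset.prod_univ_sum (fun _ : Fin n => (Finset.univ : Finset Bool))
      (fun y t => bernWt p t * (if y = x then ind t else 1))
    rw [Fintype.piFinset_univ] at h2
    simp_rw [h1]
    rw [← h2, Finset.prod_eq_single x]
    · simp [bernWt, ind]
    · intro y _ hy
      simp [bernWt, hy]
    · simp
  simp_rw [subsetSize, Finset.mul_sum]
  rw [Finset.sum_comm]
  simp [key]

lemma missInd_nonneg {n : ℕ} (b c : Fin n → Bool) (π : Fin n → Fin n) : 0 ≤ missInd b c π :=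
  Finset.prod_nonneg fun x _ => by unfold ind; split_ifs <;> norm_num

lemma missInd_eq_one {n : ℕ} (b c : Fin n → Bool) (π : Fin n → Fin n)
    (h : ¬ ∃ x, b x = true ∧ c (π x) = true) : missInd b c π = 1 := by
  refine Finset.prod_eq_one fun x _ => ?_
  push Not at h
  by_cases hb : b x = true
  · simp [ind, h x hb]
  · simp [ind, hb]

/-- As `π` is a bijection, the pairs `(b x, c (π x))` are independent for distinct `x`. -/
lemma sum_missInd {n : ℕ} (p : ℝ) (π : Fin n → Fin n) (hπ : π.Bijective) :
    ∑ b : Fin n → Bool, ∑ c : Fin n → Bool, subsetWt p b * subsetWt p c * missInd b c π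
      = (1 - p ^ 2) ^ n := by
  let σ : Fin n ≃ Fin n := Equiv.ofBijective π hπ
  have h1 : ∀ b : Fin n → Bool,
      ∑ c : Fin n → Bool, subsetWt p b * subsetWt p c * missInd b c π
        = ∑ c : Fin n → Bool,
            ∏ x, (bernWt p (b x) * bernWt p (c x) * (1 - ind (b x) * ind (c x))) := by
    intro b
    refine Fintype.sum_equiv (σ.symm.arrowCongr (Equiv.refl Bool)) _ _ fun c => ?_
    have h2 : subsetWt p c = ∏ x, bernWt p (c (π x)) :=
      (Equiv.prod_comp σ fun x => bernWt p (c x)).symm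
    rw [h2, subsetWt, missInd, ← Finset.prod_mul_distrib, ← Finset.prod_mul_distrib]
    rfl
  simp_rw [h1]
  have h3 : ∑ t : Bool × Bool, bernWt p t.1 * bernWt p t.2 * (1 - ind t.1 * ind t.2)
      = 1 - p ^ 2 := by
    simp [Fintype.sum_prod_type, bernWt, ind]
    ring
  rw [← h3, Fintype.sum_pow, ← Fintype.sum_prod_type']
  exact (Fintype.sum_equiv (Equiv.arrowProdEquivProdArrow (Fin n) (fun _ => Bool) (fun _ => Bool))
    _ _ fun u => rfl).symm

/-- The first-moment argument: some choice of three subsets does at least as well as the average. -/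
lemma exists_few_bad_lines {n : ℕ} {p : ℝ} (h0 : 0 ≤ p) (h1 : p ≤ 1)
    (π ρ σ : Fin n → Fin n → Fin n) (hπ : ∀ i, (π i).Bijective) (hρ : ∀ i, (ρ i).Bijective)
    (hσ : ∀ i, (σ i).Bijective) :
    ∃ a b c : Fin n → Bool,
      subsetSize a + subsetSize b + subsetSize c + ∑ i, missInd b c (π i)
        + ∑ i, missInd a c (ρ i) + ∑ i, missInd a b (σ i)
      ≤ 3 * (n * p) + 3 * (n * (1 - p ^ 2) ^ n) := by
  by_contra! hcon
  set K := 3 * (n * p) + 3 * (n * (1 - p ^ 2) ^ n) with hK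
  let W : (Fin n → Bool) → ℝ := subsetWt p
  have hW : ∑ a, W a = 1 := sum_subsetWt p
  have hN : ∑ a, W a * subsetSize a = n * p := sum_subsetWt_mul_size p
  have hZ : ∀ τ : Fin n → Fin n → Fin n, (∀ i, (τ i).Bijective) →
      ∑ b, ∑ c, W b * W c * ∑ i, missInd b c (τ i) = n * (1 - p ^ 2) ^ n := by
    intro τ hτ
    have h : ∀ i, ∑ b, ∑ c, W b * W c * missInd b c (τ i) = (1 - p ^ 2) ^ n :=
      fun i => sum_missInd p (τ i) (hτ i)
    simp_rw [Finset.mul_sum]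
    rw [Finset.sum_congr rfl fun b _ => Finset.sum_comm, Finset.sum_comm]
    simp [h]
  -- the expected value of the left-hand side, by linearity
  have htot : ∑ a, ∑ b, ∑ c, W a * W b * W c *
      (subsetSize a + subsetSize b + subsetSize c + ∑ i, missInd b c (π i)
        + ∑ i, missInd a c (ρ i) + ∑ i, missInd a b (σ i)) = K := by
    have e1 : ∑ a, ∑ b, ∑ c, W a * W b * W c * subsetSize a = n * p := by
      calc _ = ∑ a, (W a * subsetSize a) * ((∑ b, W b) * ∑ c, W c) := by
            simp_rw [Finset.sum_mul_sum, Finset.mul_sum]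
            refine Finset.sum_congr rfl fun a _ => Finset.sum_congr rfl fun b _ =>
              Finset.sum_congr rfl fun c _ => by ring
        _ = _ := by simp [hW, hN]
    have e2 : ∑ a, ∑ b, ∑ c, W a * W b * W c * subsetSize b = n * p := by
      calc _ = ∑ a, W a * ((∑ b, W b * subsetSize b) * ∑ c, W c) := by
            simp_rw [Finset.sum_mul_sum, Finset.mul_sum]
            refine Finset.sum_congr rfl fun a _ => Finset.sum_congr rfl fun b _ =>
              Finset.sum_congr rfl fun c _ => by ring
        _ = _ := by simp [hW, hN, ← Finset.sum_mul]
    have e3 : ∑ a, ∑ b, ∑ c, W a * W b * W c * subsetSize c = n * p := by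
      calc _ = ∑ a, W a * ((∑ b, W b) * ∑ c, W c * subsetSize c) := by
            simp_rw [Finset.sum_mul_sum, Finset.mul_sum]
            refine Finset.sum_congr rfl fun a _ => Finset.sum_congr rfl fun b _ =>
              Finset.sum_congr rfl fun c _ => by ring
        _ = _ := by simp [hW, hN, ← Finset.sum_mul]
    have e4 : ∑ a, ∑ b, ∑ c, W a * W b * W c * ∑ i, missInd b c (π i)
        = n * (1 - p ^ 2) ^ n := by
      calc _ = ∑ a, W a * ∑ b, ∑ c, W b * W c * ∑ i, missInd b c (π i) := by
            refine Finset.sum_congr rfl fun a _ => ?_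
            rw [Finset.mul_sum]
            refine Finset.sum_congr rfl fun b _ => ?_
            rw [Finset.mul_sum]
            exact Finset.sum_congr rfl fun c _ => by ring
        _ = _ := by rw [hZ π hπ, ← Finset.sum_mul, hW, one_mul]
    have e5 : ∑ a, ∑ b, ∑ c, W a * W b * W c * ∑ i, missInd a c (ρ i)
        = n * (1 - p ^ 2) ^ n := by
      calc _ = ∑ b, W b * ∑ a, ∑ c, W a * W c * ∑ i, missInd a c (ρ i) := by
            rw [Finset.sum_comm]
            refine Finset.sum_congr rfl fun b _ => ?_
            rw [Finset.mul_sum]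
            refine Finset.sum_congr rfl fun a _ => ?_
            rw [Finset.mul_sum]
            exact Finset.sum_congr rfl fun c _ => by ring
        _ = _ := by rw [hZ ρ hρ, ← Finset.sum_mul, hW, one_mul]
    have e6 : ∑ a, ∑ b, ∑ c, W a * W b * W c * ∑ i, missInd a b (σ i)
        = n * (1 - p ^ 2) ^ n := by
      rw [← hZ σ hσ]
      refine Finset.sum_congr rfl fun a _ => Finset.sum_congr rfl fun b _ => ?_
      rw [← Finset.sum_mul, ← Finset.mul_sum, hW, mul_one]
    simp_rw [mul_add, Finset.sum_add_distrib]
    rw [e1, e2, e3, e4, e5, e6, hK]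
    ring
  have hK1 : ∑ a, ∑ b, ∑ c, W a * W b * W c * K = K := by
    simp_rw [← Finset.sum_mul, ← Finset.mul_sum, hW, mul_one, ← Finset.mul_sum, hW,
      mul_one, hW, one_mul]
  have hWn : ∀ a, 0 ≤ W a := subsetWt_nonneg h0 h1
  -- a subset of positive weight makes the comparison of averages strict
  obtain ⟨a, -, ha⟩ : ∃ a ∈ Finset.univ, 0 < W a :=
    Finset.exists_lt_of_sum_lt (by simp [hW])
  have hlt : ∑ a, ∑ b, ∑ c, W a * W b * W c * K < K := by
    conv_rhs => rw [← htot]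
    have hle : ∀ x y z, W x * W y * W z * K ≤ W x * W y * W z *
      (subsetSize x + subsetSize y + subsetSize z + ∑ i, missInd y z (π i)
        + ∑ i, missInd x z (ρ i) + ∑ i, missInd x y (σ i)) := fun x y z =>
      mul_le_mul_of_nonneg_left (hcon x y z).le
        (mul_nonneg (mul_nonneg (hWn x) (hWn y)) (hWn z))
    refine Finset.sum_lt_sum (fun x _ => Finset.sum_le_sum fun y _ => Finset.sum_le_sum fun z _ =>
      hle x y z) ⟨a, Finset.mem_univ _, ?_⟩
    refine Finset.sum_lt_sum (fun y _ => Finset.sum_le_sum fun z _ => hle a y z)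
      ⟨a, Finset.mem_univ _, ?_⟩
    refine Finset.sum_lt_sum (fun z _ => hle a a z) ⟨a, Finset.mem_univ _, ?_⟩
    exact mul_lt_mul_of_pos_left (hcon a a a) (by positivity)
  linarith

/-! ### Large minimal covers of Latin squares -/

lemma card_filter_le_sum {n : ℕ} (P : Fin n → Prop) [DecidablePred P] (f : Fin n → ℝ)
    (h0 : ∀ i, 0 ≤ f i) (h1 : ∀ i, P i → 1 ≤ f i) :
    ((Finset.univ.filter P).card : ℝ) ≤ ∑ i, f i := by
  rw [Finset.card_filter]
  push_cast
  refine Finset.sum_le_sum fun i _ => ?_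
  split_ifs with h
  · exact h1 i h
  · exact h0 i

lemma exists_cover_of_prob {n : ℕ} (L : Fin n → Fin n → Fin n) (hL : IsLatin L) {p : ℝ}
    (h0 : 0 ≤ p) (h1 : p ≤ 1) :
    ∃ M, IsMinimalLSCover L M ∧
      (3 * n : ℝ) - 4 * (3 * (n * p) + 3 * (n * (1 - p ^ 2) ^ n)) ≤ (M.card : ℝ) := by
  classical
  -- `σ s i` is the column containing symbol `s` in row `i`
  choose σ hσ using fun s i => (hL.1 i).2 s
  have hσb : ∀ s, (σ s).Bijective := fun s => Finite.injective_iff_bijective.1 fun i i' h =>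
    (hL.2 (σ s i)).1 (by
      have h1 := hσ s i
      have h2 := hσ s i'
      rw [← h] at h2
      exact h1.trans h2.symm)
  obtain ⟨a, b, c, habc⟩ := exists_few_bad_lines h0 h1 L (fun j i => L i j) σ hL.1 hL.2 hσb
  -- the good lines
  let P : Fin n ⊕ Fin n ⊕ Fin n → Prop := Sum.elim
    (fun i => a i = false ∧ ∃ x, b x = true ∧ c (L i x) = true)
    (Sum.elim (fun j => b j = false ∧ ∃ x, a x = true ∧ c (L x j) = true)
      (fun s => c s = false ∧ ∃ x, a x = true ∧ b (σ s x) = true))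
  obtain ⟨M, hM, hcard⟩ := exists_large_minimal_cover L hL (Finset.univ.filter P) (by
    intro l hl
    have hPl := (Finset.mem_filter.1 hl).2
    rcases l with i | j | s
    · obtain ⟨hi, x, hb, hc⟩ := hPl
      refine ⟨_, mem_lsEntries L i x, by simp [entryLines], ?_⟩
      intro l' hl' hmem
      have hP' := (Finset.mem_filter.1 hl').2
      simp only [entryLines, Finset.mem_insert, Finset.mem_singleton] at hmem
      rcases hmem with rfl | rfl | rfl
      · rfl
      · simp [P, hb] at hP'
      · simp [P, hc] at hP'
    · obtain ⟨hi, x, hb, hc⟩ := hPl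
      refine ⟨_, mem_lsEntries L x j, by simp [entryLines], ?_⟩
      intro l' hl' hmem
      have hP' := (Finset.mem_filter.1 hl').2
      simp only [entryLines, Finset.mem_insert, Finset.mem_singleton] at hmem
      rcases hmem with rfl | rfl | rfl
      · simp [P, hb] at hP'
      · rfl
      · simp [P, hc] at hP'
    · obtain ⟨hi, x, hb, hc⟩ := hPl
      have hs : L x (σ s x) = s := hσ s x
      refine ⟨_, mem_lsEntries L x (σ s x), by simp [entryLines, hs], ?_⟩
      intro l' hl' hmem
      have hP' := (Finset.mem_filter.1 hl').2
      simp only [entryLines, Finset.mem_insert, Finset.mem_singleton] at hmem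
      rcases hmem with rfl | rfl | rfl
      · simp [P, hb] at hP'
      · simp [P, hc] at hP'
      · rw [hs])
  refine ⟨M, hM, ?_⟩
  have hind : ∀ t, 0 ≤ ind t := fun t => by unfold ind; split_ifs <;> norm_num
  have hbad : ∀ (u v w : Fin n → Bool) (τ : Fin n → Fin n → Fin n),
      ((Finset.univ.filter fun i => ¬ (u i = false ∧ ∃ x, v x = true ∧ w (τ i x) = true)).card : ℝ)
        ≤ subsetSize u + ∑ i, missInd v w (τ i) := by
    intro u v w τ
    rw [subsetSize, ← Finset.sum_add_distrib]
    refine card_filter_le_sum _ _ (fun i => add_nonneg (hind _) (missInd_nonneg _ _ _)) ?_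
    intro i hi
    by_cases hu : u i = true
    · have := missInd_nonneg v w (τ i)
      simp only [ind, hu, if_true]
      linarith
    · have h := missInd_eq_one v w (τ i) fun hx => hi ⟨by simpa using hu, hx⟩
      have := hind (u i)
      linarith
  have hsplit : (Finset.univ.filter P)ᶜ.card
      = (Finset.univ.filter fun i => ¬ P (.inl i)).card
        + ((Finset.univ.filter fun j => ¬ P (.inr (.inl j))).card
          + (Finset.univ.filter fun s => ¬ P (.inr (.inr s))).card) := by
    rw [Finset.compl_filter]
    simp only [Finset.card_filter, Fintype.sum_sum_type]
  have hr : ((Finset.univ.filter fun i => ¬ P (.inl i)).card : ℝ)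
      ≤ subsetSize a + ∑ i, missInd b c (L i) := by
    convert hbad a b c L
    rfl
  have hc : ((Finset.univ.filter fun j => ¬ P (.inr (.inl j))).card : ℝ)
      ≤ subsetSize b + ∑ j, missInd a c (fun i => L i j) := by
    convert hbad b a c (fun j i => L i j)
    rfl
  have hs : ((Finset.univ.filter fun s => ¬ P (.inr (.inr s))).card : ℝ)
      ≤ subsetSize c + ∑ s, missInd a b (σ s) := by
    convert hbad c a b σ
    rfl
  have hcard' : (3 * n : ℝ) ≤ M.card + 4 * ((Finset.univ.filter P)ᶜ.card : ℝ) := by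
    exact_mod_cast hcard
  rw [hsplit] at hcard'
  push_cast at hcard'
  linarith

/-- With `p = √(log n / n)`, the expected number of bad lines is `O(√(n log n))`, and
`log n ≤ n^(2ε) / (2ε)`. -/
lemma bound_real (ε : ℝ) (hε : 0 < ε) (n : ℕ) (hn : 1 ≤ n) :
    ∃ p : ℝ, 0 ≤ p ∧ p ≤ 1 ∧
      n * p + n * (1 - p ^ 2) ^ n ≤ (1 / √(2 * ε) + 1) * (n : ℝ) ^ ((1 : ℝ) / 2 + ε) := by
  have hn1 : (1 : ℝ) ≤ n := by exact_mod_cast hn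
  have hn0 : (0 : ℝ) < n := by linarith
  have hlog : 0 ≤ Real.log n := Real.log_nonneg hn1
  have hlogn : Real.log n / n ≤ 1 := by
    rw [div_le_one hn0]
    have := Real.log_le_sub_one_of_pos hn0
    linarith
  have hsq : √(Real.log n / n) ^ 2 = Real.log n / n := Real.sq_sqrt (by positivity)
  refine ⟨√(Real.log n / n), Real.sqrt_nonneg _, Real.sqrt_le_one.2 hlogn, ?_⟩
  have hA : n * √(Real.log n / n) ≤ 1 / √(2 * ε) * (n : ℝ) ^ ((1 : ℝ) / 2 + ε) := by
    have hl : Real.log n ≤ (n : ℝ) ^ (2 * ε) / (2 * ε) :=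
      Real.log_le_rpow_div hn0.le (by linarith)
    refine le_of_sq_le_sq ?_ (by positivity)
    have hx : ((n : ℝ) ^ ((1 : ℝ) / 2 + ε)) ^ 2 = n * (n : ℝ) ^ (2 * ε) := by
      rw [← Real.rpow_natCast, ← Real.rpow_mul hn0.le, ← Real.rpow_one_add' hn0.le (by linarith)]
      congr 1
      push_cast
      ring
    rw [mul_pow, mul_pow, hsq, hx, div_pow, Real.sq_sqrt (by linarith)]
    calc (n : ℝ) ^ 2 * (Real.log n / n) = n * Real.log n := by field_simp
      _ ≤ n * ((n : ℝ) ^ (2 * ε) / (2 * ε)) := by gcongr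
      _ = _ := by ring
  have hB : n * (1 - √(Real.log n / n) ^ 2) ^ n ≤ 1 := by
    rw [hsq]
    have h := Real.one_sub_div_pow_le_exp_neg (n := n) (t := Real.log n) (by
      have := Real.log_le_sub_one_of_pos hn0
      linarith)
    rw [Real.exp_neg, Real.exp_log hn0] at h
    calc n * (1 - Real.log n / n) ^ n ≤ n * (n : ℝ)⁻¹ := by gcongr
      _ = 1 := mul_inv_cancel₀ hn0.ne'
  have hC : (1 : ℝ) ≤ (n : ℝ) ^ ((1 : ℝ) / 2 + ε) := Real.one_le_rpow hn1 (by positivity)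
  linarith

/-- For every `ε > 0` there is a constant `c > 0` such that every Latin square of
order `n ≥ 1` has a minimal cover of size at least `3n - c·n^(1/2 + ε)`. -/
theorem stmt19 (ε : ℝ) (hε : 0 < ε) :
    ∃ c : ℝ, 0 < c ∧
      ∀ n : ℕ, 1 ≤ n → ∀ L : Fin n → Fin n → Fin n, IsLatin L →
        ∃ M : Finset (Fin n × Fin n × Fin n),
          IsMinimalLSCover L M ∧
            (3 * n : ℝ) - c * (n : ℝ) ^ ((1 : ℝ) / 2 + ε) ≤ (M.card : ℝ) := by
  refine ⟨12 * (1 / √(2 * ε) + 1), by positivity, fun n hn L hL => ?_⟩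
  obtain ⟨p, h0, h1, hp⟩ := bound_real ε hε n hn
  obtain ⟨M, hM, hcard⟩ := exists_cover_of_prob L hL h0 h1
  exact ⟨M, hM, by linarith⟩
end
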